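/- arXiv:2601.04009 — 7 statements merged into one kernel-verified Lean document; each statement's English description precedes it below -/
import Mathlib

section
/- Let T₀ = {(x,y) ∈ ℝ² : 0 < x, 0 < y, x + y < 2} be the open standard triangle (the interior of the convex hull of (0,0), (2,0), (0,2)), and let p = (x,y) ∈ T₀. Then the Hilbert unit ball B_p = {ξ ∈ ℝ² : gauge(T₀ − p)(ξ) + gauge(p − T₀)(ξ) ≤ 2} equals the convex hull of the six points ±ξ₁, ±ξ₂, ±ξ₃, where ξ₁ = ((x+y−2)x, (x+y−2)y), ξ₂ = (x(2−x), −xy), ξ₃ = (−xy, y(2−y)). -/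
open Pointwise

/-- The open standard triangle with vertices `(0,0)`, `(2,0)`, `(0,2)`. -/
def stdTriangle : Set (ℝ × ℝ) := {q | 0 < q.1 ∧ 0 < q.2 ∧ q.1 + q.2 < 2}

/-- The Hilbert unit ball of a convex domain `Ω` at a point `p`. -/
noncomputable def hilbertUnitBall (Ω : Set (ℝ × ℝ)) (p : ℝ × ℝ) : Set (ℝ × ℝ) :=
  {ξ : ℝ × ℝ | gauge (Ω - {p}) ξ + gauge ({p} - Ω) ξ ≤ 2}

/-!
Let `a i` be the barycentric coordinates of a point `p` of an open simplex with vertices `w i`, and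
let `φ i` be the linear functional equal to `1` on the `i`-th facet of the simplex translated by
`-p`. The gauge of the translated simplex is `max φ i`, so the Hilbert unit ball at `p` consists of
the vectors `ξ` on which the `φ i` oscillate by at most `2`. The vectors `v i = 2 a i (w i - p)` sum
to zero and `2 ξ = -∑ φ i ξ • v i`; adding a constant to all the coefficients brings those of `ξ`
into `[0, 1]`, so the ball is the zonotope generated by the `v i`. For three generators with sum
zero, the nonzero vertices `v i` and `v i + v j = -v k` of the zonotope form a hexagon.
-/

section Gauge

variable {ι E : Type*} [Finite ι] [AddCommGroup E] [Module ℝ E] (φ : ι → Module.Dual ℝ E)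

lemma gauge_setOf_forall_lt_one {η : E} (hη : ∃ i, 0 ≤ φ i η) :
    gauge {ξ | ∀ i, φ i ξ < 1} η = ⨆ i, φ i η := by
  obtain ⟨i, hi⟩ := hη
  have : Nonempty ι := ⟨i⟩
  have hsup : 0 ≤ ⨆ i, φ i η := hi.trans (Finite.le_ciSup (fun i ↦ φ i η) i)
  have hlt (r : ℝ) : ⨆ i, φ i η < r ↔ ∀ i, φ i η < r := by
    obtain ⟨j, hj⟩ := exists_eq_ciSup_of_finite (f := fun i ↦ φ i η)
    exact ⟨fun h i ↦ (Finite.le_ciSup (fun i ↦ φ i η) i).trans_lt h, fun h ↦ hj ▸ h j⟩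
  have hset : {r ∈ Set.Ioi (0 : ℝ) | r⁻¹ • η ∈ {ξ | ∀ i, φ i ξ < 1}} = Set.Ioi (⨆ i, φ i η) := by
    ext r
    have hscale (hr : 0 < r) (i : ι) : φ i (r⁻¹ • η) < 1 ↔ φ i η < r := by
      rw [map_smul, smul_eq_mul, inv_mul_lt_one₀ hr]
    simp only [Set.mem_ofPred_eq, Set.mem_Ioi, hlt]
    exact ⟨fun ⟨hr, h⟩ i ↦ (hscale hr i).1 (h i), fun h ↦
      have hr : 0 < r := hsup.trans_lt ((hlt r).2 h)
      ⟨hr, fun i ↦ (hscale hr i).2 (h i)⟩⟩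
  rw [gauge_def', hset, csInf_Ioi]

lemma gauge_add_gauge_neg_le_iff (hφ : ∀ ξ, ∃ i, 0 ≤ φ i ξ) {η : E} {c : ℝ} :
    gauge {ξ | ∀ i, φ i ξ < 1} η + gauge (-{ξ | ∀ i, φ i ξ < 1}) η ≤ c ↔
      ∀ i j, φ i η - φ j η ≤ c := by
  have : Nonempty ι := (hφ 0).nonempty
  rw [gauge_neg_set_eq_gauge_neg, gauge_setOf_forall_lt_one φ (hφ η),
    gauge_setOf_forall_lt_one φ (hφ (-η))]
  constructor
  · intro h i j
    have hi := Finite.le_ciSup (fun i ↦ φ i η) i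
    have hj := Finite.le_ciSup (fun i ↦ φ i (-η)) j
    rw [map_neg] at hj
    linarith
  · intro h
    obtain ⟨i, hi⟩ := exists_eq_ciSup_of_finite (f := fun i ↦ φ i η)
    obtain ⟨j, hj⟩ := exists_eq_ciSup_of_finite (f := fun i ↦ φ i (-η))
    rw [← hi, ← hj, map_neg, ← sub_eq_add_neg]
    exact h i j

end Gauge

section Simplex

variable {ι E : Type*} [AddCommGroup E] [Module ℝ E] (b : AffineBasis ι ℝ E) {p : E}

/-- The open simplex spanned by an affine basis, described by the positivity of the barycentric
coordinates. -/
def openSimplex : Set E := {q | ∀ i, 0 < b.coord i q}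

/-- The linear functional equal to `1` on the `i`-th facet of the simplex translated by `-p`
(and to `0` if `p` lies on the hyperplane of that facet). -/
noncomputable def facetFunctional (p : E) (i : ι) : Module.Dual ℝ E :=
  -(b.coord i p)⁻¹ • (b.coord i).linear

/-- The generators of the Hilbert unit ball of an open simplex at `p`, viewed as a zonotope: the
vectors from `p` to the vertices, scaled by twice the barycentric coordinates of `p`. -/
noncomputable def hilbertGenerator (p : E) (i : ι) : E := (2 * b.coord i p) • (b i - p)

lemma facetFunctional_apply (p η : E) (i : ι) :
    facetFunctional b p i η = -((b.coord i p)⁻¹ * (b.coord i).linear η) := by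
  simp [facetFunctional]

lemma coord_mul_facetFunctional (hp : p ∈ openSimplex b) (i : ι) (η : E) :
    b.coord i p * facetFunctional b p i η = -(b.coord i).linear η := by
  rw [facetFunctional_apply, mul_neg, mul_inv_cancel_left₀ (hp i).ne']

lemma openSimplex_sub_singleton (hp : p ∈ openSimplex b) :
    openSimplex b - {p} = {η | ∀ i, facetFunctional b p i η < 1} := by
  ext η
  have hcoord (i : ι) : b.coord i (η + p) = (b.coord i).linear η + b.coord i p :=
    (b.coord i).map_vadd p η
  have hlt (i : ι) : 0 < b.coord i (η + p) ↔ facetFunctional b p i η < 1 := by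
    rw [hcoord, ← neg_lt_iff_pos_add', ← coord_mul_facetFunctional b hp,
      mul_lt_iff_lt_one_right (hp i)]
  simp only [Set.sub_singleton, Set.mem_image, sub_eq_iff_eq_add, exists_eq_right]
  exact forall_congr' hlt

lemma facetFunctional_hilbertGenerator [DecidableEq ι] (hp : p ∈ openSimplex b) (i j : ι) :
    facetFunctional b p i (hilbertGenerator b p j) =
      2 * (b.coord j p - if i = j then 1 else 0) := by
  have hi : b.coord i p ≠ 0 := (hp i).ne'
  have hvertex : (b.coord i).linear (b j - p) = (if i = j then 1 else 0) - b.coord i p := by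
    rw [← b.coord_apply]
    exact (b.coord i).linearMap_vsub (b j) p
  rw [hilbertGenerator, map_smul, smul_eq_mul, facetFunctional_apply, hvertex]
  split_ifs with hij
  · obtain rfl := hij
    field_simp
    ring
  · field_simp
    ring

lemma sum_coord_linear [Fintype ι] (η : E) : ∑ i, (b.coord i).linear η = 0 := by
  simp only [AffineMap.decomp', Pi.sub_apply, Finset.sum_sub_distrib, b.sum_coord_apply_eq_one,
    sub_self]

lemma sum_coord_linear_smul [Fintype ι] (η : E) : ∑ i, (b.coord i).linear η • b i = η := by
  simp only [AffineMap.decomp', Pi.sub_apply, sub_smul, Finset.sum_sub_distrib,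
    b.linear_combination_coord_eq_self, sub_zero]

lemma exists_facetFunctional_nonneg [Finite ι] (hp : p ∈ openSimplex b) (η : E) :
    ∃ i, 0 ≤ facetFunctional b p i η := by
  have := Fintype.ofFinite ι
  have := b.nonempty
  by_contra! hneg
  have hsum : ∑ i, b.coord i p * facetFunctional b p i η = 0 := by
    simp only [coord_mul_facetFunctional b hp, Finset.sum_neg_distrib, sum_coord_linear, neg_zero]
  exact hsum.not_lt <| Finset.sum_neg (fun i _ ↦ mul_neg_of_pos_of_neg (hp i) (hneg i))
    Finset.univ_nonempty

variable [Fintype ι]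

lemma sum_hilbertGenerator (p : E) : ∑ i, hilbertGenerator b p i = 0 := by
  simp only [hilbertGenerator, mul_smul, ← Finset.smul_sum, smul_sub, Finset.sum_sub_distrib,
    b.linear_combination_coord_eq_self, ← Finset.sum_smul, b.sum_coord_apply_eq_one, one_smul,
    sub_self]

lemma sum_facetFunctional_smul_hilbertGenerator (hp : p ∈ openSimplex b) (η : E) :
    ∑ i, facetFunctional b p i η • hilbertGenerator b p i = -(2 : ℝ) • η := by
  have hterm (i : ι) : facetFunctional b p i η • hilbertGenerator b p i =
      -(2 : ℝ) • ((b.coord i).linear η • b i - (b.coord i).linear η • p) := by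
    rw [hilbertGenerator, smul_smul, mul_left_comm, mul_comm (facetFunctional b p i η),
      coord_mul_facetFunctional b hp, mul_neg, ← neg_mul, mul_smul, smul_sub]
  simp only [hterm, ← Finset.smul_sum, Finset.sum_sub_distrib, sum_coord_linear_smul,
    ← Finset.sum_smul, sum_coord_linear, zero_smul, sub_zero]

lemma facetFunctional_sum_smul_hilbertGenerator (hp : p ∈ openSimplex b) (t : ι → ℝ) (i : ι) :
    facetFunctional b p i (∑ j, t j • hilbertGenerator b p j) =
      2 * ∑ j, t j * b.coord j p - 2 * t i := by
  classical
  simp only [map_sum, map_smul, smul_eq_mul, facetFunctional_hilbertGenerator b hp, mul_sub,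
    Finset.sum_sub_distrib, mul_ite, mul_zero, Finset.sum_ite_eq, Finset.mem_univ, if_true,
    Finset.mul_sum, mul_one, mul_left_comm (2 : ℝ), mul_comm (t i)]

theorem setOf_gauge_add_gauge_le_two_eq_parallelepiped (hp : p ∈ openSimplex b) :
    {ξ | gauge (openSimplex b - {p}) ξ + gauge ({p} - openSimplex b) ξ ≤ 2} =
      parallelepiped (hilbertGenerator b p) := by
  have := b.nonempty
  ext ξ
  rw [← neg_sub (openSimplex b), openSimplex_sub_singleton b hp, Set.mem_ofPred_eq,
    gauge_add_gauge_neg_le_iff _ (exists_facetFunctional_nonneg b hp), mem_parallelepiped_iff]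
  constructor
  · intro hosc
    obtain ⟨k, hk⟩ := Finite.exists_max fun i ↦ facetFunctional b p i ξ
    refine ⟨fun i ↦ (facetFunctional b p k ξ - facetFunctional b p i ξ) / 2,
      ⟨fun i ↦ div_nonneg (sub_nonneg.2 (hk i)) zero_le_two,
        fun i ↦ (div_le_one two_pos).2 (hosc k i)⟩, ?_⟩
    simp only [sub_smul, Finset.sum_sub_distrib, ← Finset.smul_sum, sum_hilbertGenerator,
      div_eq_inv_mul, mul_smul, sum_facetFunctional_smul_hilbertGenerator b hp]
    module
  · rintro ⟨t, ⟨ht₀, ht₁⟩, rfl⟩ i j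
    have hi : 0 ≤ t i := ht₀ i
    have hj : t j ≤ 1 := ht₁ j
    simp only [facetFunctional_sum_smul_hilbertGenerator b hp]
    linarith

end Simplex

lemma convexHull_insert_of_mem_convexHull {E : Type*} [AddCommGroup E] [Module ℝ E] {s : Set E}
    {x : E} (hx : x ∈ convexHull ℝ s) : convexHull ℝ (insert x s) = convexHull ℝ s :=
  (convexHull_min (Set.insert_subset hx (subset_convexHull ℝ s)) (convex_convexHull ℝ s)).antisymm
    (convexHull_mono (Set.subset_insert x s))

lemma parallelepiped_eq_convexHull_of_sum_eq_zero {E : Type*} [AddCommGroup E] [Module ℝ E]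
    {v : Fin 3 → E} (hv : ∑ i, v i = 0) :
    parallelepiped v = convexHull ℝ {v 0, v 1, v 2, -v 0, -v 1, -v 2} := by
  rw [Fin.sum_univ_three] at hv
  have h01 : v 0 + v 1 = -v 2 := eq_neg_of_add_eq_zero_left hv
  have h02 : v 0 + v 2 = -v 1 := by rw [eq_neg_iff_add_eq_zero, add_right_comm, hv]
  have h12 : v 1 + v 2 = -v 0 := by rw [eq_neg_iff_add_eq_zero, add_comm, ← add_assoc, hv]
  have hvertices : ∑ i, {0, v i} = insert 0 ({v 0, v 1, v 2, -v 0, -v 1, -v 2} : Set E) := by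
    ext w
    simp only [Fin.sum_univ_three, Set.insert_eq, Set.union_add, Set.add_union,
      Set.singleton_add_singleton, zero_add, add_zero, h01, h02, h12, neg_add_cancel, Set.mem_union,
      Set.mem_singleton_iff]
    tauto
  have hzero : (0 : E) ∈ convexHull ℝ {v 0, v 1, v 2, -v 0, -v 1, -v 2} := by
    rw [← midpoint_self_neg ℝ (v 0)]
    exact (convex_convexHull ℝ _).midpoint_mem (subset_convexHull ℝ _ (by simp))
      (subset_convexHull ℝ _ (by simp))
  rw [parallelepiped_eq_convexHull, hvertices, convexHull_insert_of_mem_convexHull hzero]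

section StdTriangle

lemma affineIndependent_stdTriangle_vertices :
    AffineIndependent ℝ ![((0, 0) : ℝ × ℝ), (2, 0), (0, 2)] := by
  rw [affineIndependent_iff_of_fintype]
  intro w hsum hcomb
  rw [Finset.weightedVSub_eq_linear_combination _ hsum] at hcomb
  obtain ⟨h1, h2⟩ : w 1 = 0 ∧ w 2 = 0 := by simpa [Fin.sum_univ_three] using hcomb
  have h0 : w 0 = 0 := by simpa only [Fin.sum_univ_three, h1, h2, add_zero] using hsum
  exact Fin.forall_fin_succ.2 ⟨h0, Fin.forall_fin_two.2 ⟨h1, h2⟩⟩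

/-- The vertices of `stdTriangle`, as an affine basis of the plane. -/
def stdTriangleBasis : AffineBasis (Fin 3) ℝ (ℝ × ℝ) where
  toFun := ![(0, 0), (2, 0), (0, 2)]
  ind' := affineIndependent_stdTriangle_vertices
  tot' := by
    rw [affineIndependent_stdTriangle_vertices.affineSpan_eq_top_iff_card_eq_finrank_add_one]
    simp

lemma coe_stdTriangleBasis : ⇑stdTriangleBasis = ![(0, 0), (2, 0), (0, 2)] := rfl

lemma stdTriangleBasis_coord_one (q : ℝ × ℝ) : stdTriangleBasis.coord 1 q = q.1 / 2 := by
  rw [eq_div_iff two_ne_zero]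
  simpa [Fin.sum_univ_three, coe_stdTriangleBasis] using
    congrArg Prod.fst (stdTriangleBasis.linear_combination_coord_eq_self q)

lemma stdTriangleBasis_coord_two (q : ℝ × ℝ) : stdTriangleBasis.coord 2 q = q.2 / 2 := by
  rw [eq_div_iff two_ne_zero]
  simpa [Fin.sum_univ_three, coe_stdTriangleBasis] using
    congrArg Prod.snd (stdTriangleBasis.linear_combination_coord_eq_self q)

lemma stdTriangleBasis_coord_zero (q : ℝ × ℝ) :
    stdTriangleBasis.coord 0 q = (2 - q.1 - q.2) / 2 := by
  have h := stdTriangleBasis.sum_coord_apply_eq_one q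
  rw [Fin.sum_univ_three, stdTriangleBasis_coord_one, stdTriangleBasis_coord_two] at h
  linarith

lemma stdTriangle_eq_openSimplex : stdTriangle = openSimplex stdTriangleBasis := by
  ext q
  simp only [stdTriangle, openSimplex, Set.mem_ofPred_eq, Fin.forall_fin_succ, Fin.succ_zero_eq_one,
    Fin.succ_one_eq_two, IsEmpty.forall_iff, and_true, stdTriangleBasis_coord_zero,
    stdTriangleBasis_coord_one, stdTriangleBasis_coord_two]
  constructor
  · rintro ⟨hx, hy, hxy⟩
    exact ⟨by linarith, by linarith, by linarith⟩
  · rintro ⟨hxy, hx, hy⟩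
    exact ⟨by linarith, by linarith, by linarith⟩

lemma hilbertGenerator_stdTriangleBasis_zero (x y : ℝ) :
    hilbertGenerator stdTriangleBasis (x, y) 0 = ((x + y - 2) * x, (x + y - 2) * y) := by
  simp only [hilbertGenerator, stdTriangleBasis_coord_zero, coe_stdTriangleBasis, Matrix.cons_val,
    Prod.mk_sub_mk, Prod.smul_mk, smul_eq_mul]
  ext <;> ring

lemma hilbertGenerator_stdTriangleBasis_one (x y : ℝ) :
    hilbertGenerator stdTriangleBasis (x, y) 1 = (x * (2 - x), -(x * y)) := by
  simp only [hilbertGenerator, stdTriangleBasis_coord_one, coe_stdTriangleBasis, Matrix.cons_val,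
    Prod.mk_sub_mk, Prod.smul_mk, smul_eq_mul]
  ext <;> ring

lemma hilbertGenerator_stdTriangleBasis_two (x y : ℝ) :
    hilbertGenerator stdTriangleBasis (x, y) 2 = (-(x * y), y * (2 - y)) := by
  simp only [hilbertGenerator, stdTriangleBasis_coord_two, coe_stdTriangleBasis, Matrix.cons_val,
    Prod.mk_sub_mk, Prod.smul_mk, smul_eq_mul]
  ext <;> ring

end StdTriangle

theorem stmt0 (x y : ℝ) (hp : (x, y) ∈ stdTriangle) :
    hilbertUnitBall stdTriangle (x, y) =
      convexHull ℝ
        ({((x + y - 2) * x, (x + y - 2) * y),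
          (x * (2 - x), -(x * y)),
          (-(x * y), y * (2 - y)),
          -(((x + y - 2) * x, (x + y - 2) * y) : ℝ × ℝ),
          -((x * (2 - x), -(x * y)) : ℝ × ℝ),
          -((-(x * y), y * (2 - y)) : ℝ × ℝ)} : Set (ℝ × ℝ)) := by
  rw [stdTriangle_eq_openSimplex] at hp ⊢
  rw [hilbertUnitBall, setOf_gauge_add_gauge_le_two_eq_parallelepiped stdTriangleBasis hp,
    parallelepiped_eq_convexHull_of_sum_eq_zero (sum_hilbertGenerator stdTriangleBasis (x, y)),
    hilbertGenerator_stdTriangleBasis_zero, hilbertGenerator_stdTriangleBasis_one,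
    hilbertGenerator_stdTriangleBasis_two]
end

section
/- Let T₀ = {(x,y) ∈ ℝ² : 0 < x, 0 < y, x + y < 2} and let p = (x,y) ∈ T₀. Let B_p = {ξ ∈ ℝ² : gauge(T₀ − p)(ξ) + gauge(p − T₀)(ξ) ≤ 2} be the Hilbert unit ball at p, and let B*_p = {w ∈ ℝ² : ∀ ξ ∈ B_p, w·ξ ≤ 1} be its dual (polar) ball. Then the Lebesgue measure of B*_p equals 3/(2xy(2−x−y)). -/
open Pointwise MeasureTheory

/-- The dual (polar) ball of the Hilbert unit ball of `Ω` at `p`. -/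
noncomputable def hilbertDualBall (Ω : Set (ℝ × ℝ)) (p : ℝ × ℝ) : Set (ℝ × ℝ) :=
  {w : ℝ × ℝ | ∀ ξ ∈ hilbertUnitBall Ω p, w.1 * ξ.1 + w.2 * ξ.2 ≤ 1}

/-!
For a domain `Ω` with `Ω - p = {ξ | ∀ i, f i ξ < 1}`, where the `f i` are finitely many linear
functionals, the two gauges are `max f i ξ` and `max (-f i ξ)`, so `ξ` lies in the Hilbert ball iff
the values `f i ξ` pairwise differ by at most `2`. For a triangle, every covector `w` is a
combination `∑ m i • f i` with `∑ m i = 0`, and the tuples `f i ξ` are arbitrary up to a common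
translation; the dual ball is therefore `{w | ∑ |m i| ≤ 1}`. Since `m 2 = -(m 0 + m 1)`, it is the
preimage of the hexagon `|s| + |t| + |s + t| ≤ 1`, of area `3 / 4`, under the linear map
`w ↦ (m 0, m 1)`.
-/

section Gauge

variable {ι : Type*} [Finite ι] [Nonempty ι]

theorem ciSup_lt_iff_of_finite {α : Type*} [ConditionallyCompleteLinearOrder α] {c : ι → α}
    {r : α} : ⨆ i, c i < r ↔ ∀ i, c i < r := by
  refine ⟨fun h i ↦ (le_ciSup (Set.finite_range c).bddAbove i).trans_lt h, fun h ↦ ?_⟩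
  obtain ⟨i, hi⟩ := exists_eq_ciSup_of_finite (f := c)
  exact hi ▸ h i

theorem gauge_setOf_forall_lt_one_s1 {E : Type*} [AddCommGroup E] [Module ℝ E] (f : ι → E →ₗ[ℝ] ℝ)
    {v : E} (hv : ∃ i, 0 ≤ f i v) :
    gauge {u | ∀ i, f i u < 1} v = ⨆ i, f i v := by
  obtain ⟨k, hk⟩ := hv
  have hsup : 0 ≤ ⨆ i, f i v :=
    hk.trans (le_ciSup (f := fun i ↦ f i v) (Set.finite_range _).bddAbove k)
  suffices {r ∈ Set.Ioi (0 : ℝ) | r⁻¹ • v ∈ {u | ∀ i, f i u < 1}} = Set.Ioi (⨆ i, f i v) by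
    rw [gauge_def', this, csInf_Ioi]
  ext r
  have mem_iff (hr : 0 < r) : (∀ i, f i (r⁻¹ • v) < 1) ↔ ⨆ i, f i v < r := by
    simp only [ciSup_lt_iff_of_finite, map_smul, smul_eq_mul, inv_mul_lt_one₀ hr]
  exact ⟨fun h ↦ (mem_iff h.1).1 h.2, fun h ↦ ⟨hsup.trans_lt h, (mem_iff (hsup.trans_lt h)).2 h⟩⟩

theorem ciSup_add_ciSup_neg_le_iff {c : ι → ℝ} {R : ℝ} :
    (⨆ i, c i) + ⨆ i, -c i ≤ R ↔ ∀ i j, c i - c j ≤ R := by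
  constructor
  · intro h i j
    have hi := le_ciSup (Set.finite_range c).bddAbove i
    have hj := le_ciSup (Set.finite_range fun i ↦ -c i).bddAbove j
    linarith
  · intro h
    obtain ⟨i, hi⟩ := exists_eq_ciSup_of_finite (f := c)
    obtain ⟨j, hj⟩ := exists_eq_ciSup_of_finite (f := fun i ↦ -c i)
    rw [← hi, ← hj]
    exact h i j

theorem mem_hilbertUnitBall_iff_forall_sub_le {Ω : Set (ℝ × ℝ)} {p : ℝ × ℝ}
    {f : ι → ℝ × ℝ →ₗ[ℝ] ℝ} (hΩ : Ω - {p} = {v | ∀ i, f i v < 1})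
    (hf : ∀ v, ∃ i, 0 ≤ f i v) {ξ : ℝ × ℝ} :
    ξ ∈ hilbertUnitBall Ω p ↔ ∀ i j, f i ξ - f j ξ ≤ 2 := by
  have hneg : gauge ({p} - Ω) ξ = ⨆ i, -f i ξ := by
    rw [← neg_sub Ω, gauge_neg_set_eq_gauge_neg, hΩ, gauge_setOf_forall_lt_one_s1 f (hf (-ξ))]
    simp only [map_neg]
  rw [hilbertUnitBall, Set.mem_ofPred_eq, hneg, hΩ, gauge_setOf_forall_lt_one_s1 f (hf ξ),
    ciSup_add_ciSup_neg_le_iff]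

end Gauge

theorem exists_forall_abs_sub_le {ι : Type*} [Finite ι] {c : ι → ℝ} {R : ℝ}
    (hc : ∀ i j, c i - c j ≤ 2 * R) : ∃ r, ∀ i, |c i - r| ≤ R := by
  rcases isEmpty_or_nonempty ι with _ | _
  · exact ⟨0, isEmptyElim⟩
  obtain ⟨M, hM⟩ := Finite.exists_max c
  obtain ⟨m, hm⟩ := Finite.exists_min c
  refine ⟨(c M + c m) / 2, fun i ↦ abs_le.2 ⟨?_, ?_⟩⟩ <;> linarith [hc M m, hM i, hm i]

theorem sum_mul_sub_const {ι R : Type*} [Fintype ι] [NonUnitalNonAssocRing R] {m : ι → R}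
    (hm : ∑ i, m i = 0) (c : ι → R) (r : R) : ∑ i, m i * (c i - r) = ∑ i, m i * c i := by
  simp only [mul_sub, Finset.sum_sub_distrib, ← Finset.sum_mul, hm, zero_mul, sub_zero]

theorem forall_sum_mul_le_iff_sum_abs_le {ι : Type*} [Fintype ι] {m : ι → ℝ} {K : ℝ}
    (hm : ∑ i, m i = 0) :
    (∀ c : ι → ℝ, (∀ i j, c i - c j ≤ 2) → ∑ i, m i * c i ≤ K) ↔ ∑ i, |m i| ≤ K := by
  constructor
  · intro h
    have hsign (i : ι) : |(SignType.sign (m i) : ℝ)| ≤ 1 := by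
      rcases SignType.sign (m i) <;> simp
    calc ∑ i, |m i| = ∑ i, m i * SignType.sign (m i) := by simp only [self_mul_sign]
      _ ≤ K := h _ fun i j ↦ by linarith [abs_le.1 (hsign i), abs_le.1 (hsign j)]
  · intro h c hc
    obtain ⟨r, hr⟩ := exists_forall_abs_sub_le (R := 1) (by simpa using hc)
    calc ∑ i, m i * c i = ∑ i, m i * (c i - r) := (sum_mul_sub_const hm c r).symm
      _ ≤ ∑ i, |m i| := Finset.sum_le_sum fun i _ ↦ by
          calc m i * (c i - r) ≤ |m i| * |c i - r| := (le_abs_self _).trans_eq (abs_mul _ _)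
            _ ≤ |m i| := mul_le_of_le_one_right (abs_nonneg _) (hr i)
      _ ≤ K := h

section StdTriangle

/-- The linear functionals that take the value `1` on the sides of `stdTriangle - {p}`; the sides
are those on `{q.1 = 0}`, `{q.2 = 0}` and `{q.1 + q.2 = 2}`, in this order. -/
noncomputable def stdTriangleFacet (p : ℝ × ℝ) : Fin 3 → ℝ × ℝ →ₗ[ℝ] ℝ :=
  ![-p.1⁻¹ • LinearMap.fst ℝ ℝ ℝ, -p.2⁻¹ • LinearMap.snd ℝ ℝ ℝ,
    (2 - p.1 - p.2)⁻¹ • (LinearMap.fst ℝ ℝ ℝ + LinearMap.snd ℝ ℝ ℝ)]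

/-- The coefficients of the covector `w` in the `stdTriangleFacet p i`, normalized to have sum `0`.
They are `μ i * ⟪w, p - V i⟫`, where `V i` is the vertex opposite to the side `i` and the `μ i` are
the barycentric coordinates of `p`. -/
noncomputable def stdTriangleCoeff (p w : ℝ × ℝ) : Fin 3 → ℝ :=
  let r := (w.1 * p.1 + w.2 * p.2) / 2
  ![p.1 * (r - w.1), p.2 * (r - w.2), (2 - p.1 - p.2) * r]

variable {p : ℝ × ℝ}

theorem stdTriangleFacet_apply (p v : ℝ × ℝ) (i : Fin 3) :
    stdTriangleFacet p i v =
      ![-v.1 / p.1, -v.2 / p.2, (v.1 + v.2) / (2 - p.1 - p.2)] i := by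
  fin_cases i <;> simp [stdTriangleFacet, div_eq_inv_mul, mul_add]

theorem stdTriangle_sub_singleton (hp : p ∈ stdTriangle) :
    stdTriangle - {p} = {v | ∀ i, stdTriangleFacet p i v < 1} := by
  obtain ⟨hx, hy, hxy⟩ := hp
  have hz : 0 < 2 - p.1 - p.2 := by linarith
  ext v
  calc v ∈ stdTriangle - {p} ↔ v + p ∈ stdTriangle := by
        simp only [Set.sub_singleton, Set.mem_image, sub_eq_iff_eq_add, exists_eq_right]
    _ ↔ -v.1 < p.1 ∧ -v.2 < p.2 ∧ v.1 + v.2 < 2 - p.1 - p.2 := by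
        simp only [stdTriangle, Set.mem_ofPred_eq, Prod.fst_add, Prod.snd_add]
        refine and_congr ?_ (and_congr ?_ ?_) <;> constructor <;> intro h <;> linarith
    _ ↔ ∀ i, stdTriangleFacet p i v < 1 := by
        simp [stdTriangleFacet_apply, Fin.forall_fin_succ, div_lt_one, hx, hy, hz]

theorem exists_stdTriangleFacet_nonneg (hp : p ∈ stdTriangle) (v : ℝ × ℝ) :
    ∃ i, 0 ≤ stdTriangleFacet p i v := by
  obtain ⟨hx, hy, hxy⟩ := hp
  have hz : 0 < 2 - p.1 - p.2 := by linarith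
  by_contra! h
  simp only [stdTriangleFacet_apply] at h
  have h₀ : 0 < v.1 := by simpa [div_lt_iff₀ hx] using h 0
  have h₁ : 0 < v.2 := by simpa [div_lt_iff₀ hy] using h 1
  have h₂ : v.1 + v.2 < 0 := by simpa [div_lt_iff₀ hz] using h 2
  linarith

theorem sum_stdTriangleCoeff (p w : ℝ × ℝ) : ∑ i, stdTriangleCoeff p w i = 0 := by
  simp only [stdTriangleCoeff, Fin.sum_univ_three, Matrix.cons_val]
  ring

theorem sum_stdTriangleCoeff_mul_facet (hp : p ∈ stdTriangle) (w ξ : ℝ × ℝ) :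
    ∑ i, stdTriangleCoeff p w i * stdTriangleFacet p i ξ = w.1 * ξ.1 + w.2 * ξ.2 := by
  obtain ⟨hx, hy, hxy⟩ := hp
  have hz : 2 - p.1 - p.2 ≠ 0 := by linarith
  simp only [stdTriangleCoeff, stdTriangleFacet_apply, Fin.sum_univ_three, Matrix.cons_val]
  field

theorem exists_forall_stdTriangleFacet_eq_sub (hp : p ∈ stdTriangle) (c : Fin 3 → ℝ) :
    ∃ ξ r, ∀ i, stdTriangleFacet p i ξ = c i - r := by
  obtain ⟨hx, hy, hxy⟩ := hp
  have hz : 2 - p.1 - p.2 ≠ 0 := by linarith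
  let r := (p.1 * c 0 + p.2 * c 1 + (2 - p.1 - p.2) * c 2) / 2
  refine ⟨(p.1 * (r - c 0), p.2 * (r - c 1)), r, fun i ↦ ?_⟩
  rw [stdTriangleFacet_apply]
  fin_cases i <;> simp only [Fin.mk_one, Fin.zero_eta, Fin.reduceFinMk, Matrix.cons_val, r] <;>
    field

theorem mem_hilbertDualBall_stdTriangle_iff (hp : p ∈ stdTriangle) {w : ℝ × ℝ} :
    w ∈ hilbertDualBall stdTriangle p ↔ ∑ i, |stdTriangleCoeff p w i| ≤ 1 := by
  simp only [hilbertDualBall, Set.mem_ofPred_eq,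
    mem_hilbertUnitBall_iff_forall_sub_le (stdTriangle_sub_singleton hp)
      (exists_stdTriangleFacet_nonneg hp), ← sum_stdTriangleCoeff_mul_facet hp w,
    ← forall_sum_mul_le_iff_sum_abs_le (sum_stdTriangleCoeff p w)]
  refine ⟨fun h c hc ↦ ?_, fun h ξ hξ ↦ h _ hξ⟩
  obtain ⟨ξ, r, hξ⟩ := exists_forall_stdTriangleFacet_eq_sub hp c
  rw [← sum_mul_sub_const (sum_stdTriangleCoeff p w) c r]
  simpa only [hξ] using h ξ fun i j ↦ by simpa only [hξ, sub_sub_sub_cancel_right] using hc i j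

/-- The linear map sending a covector to its first two coefficients `stdTriangleCoeff p`. -/
noncomputable def stdTriangleCoeffMap (p : ℝ × ℝ) : ℝ × ℝ →ₗ[ℝ] ℝ × ℝ :=
  Matrix.toLin (.finTwoProd ℝ) (.finTwoProd ℝ)
    !![p.1 * (p.1 / 2 - 1), p.1 * p.2 / 2; p.1 * p.2 / 2, p.2 * (p.2 / 2 - 1)]

theorem stdTriangleCoeffMap_apply (p w : ℝ × ℝ) :
    stdTriangleCoeffMap p w = (stdTriangleCoeff p w 0, stdTriangleCoeff p w 1) := by
  simp only [stdTriangleCoeffMap, Matrix.toLin_finTwoProd_apply, stdTriangleCoeff,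
    Matrix.cons_val, Prod.mk.injEq]
  constructor <;> ring

theorem det_stdTriangleCoeffMap (p : ℝ × ℝ) :
    LinearMap.det (stdTriangleCoeffMap p) = p.1 * p.2 * (2 - p.1 - p.2) / 2 := by
  rw [stdTriangleCoeffMap, LinearMap.det_toLin, Matrix.det_fin_two_of]
  ring

/-- The hexagon with vertices `± (1/2, 0)`, `± (0, 1/2)` and `± (1/2, -1/2)`; it is the image under
`stdTriangleCoeffMap p` of the dual ball at `p`, for every `p` in the triangle. -/
def coeffHexagon : Set (ℝ × ℝ) := {q | |q.1| + |q.2| + |q.1 + q.2| ≤ 1}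

theorem hilbertDualBall_stdTriangle (hp : p ∈ stdTriangle) :
    hilbertDualBall stdTriangle p = stdTriangleCoeffMap p ⁻¹' coeffHexagon := by
  ext w
  have hlast : stdTriangleCoeff p w 2 = -(stdTriangleCoeff p w 0 + stdTriangleCoeff p w 1) := by
    linarith [Fin.sum_univ_three (stdTriangleCoeff p w), sum_stdTriangleCoeff p w]
  rw [mem_hilbertDualBall_stdTriangle_iff hp, Fin.sum_univ_three, hlast, abs_neg, Set.mem_preimage,
    stdTriangleCoeffMap_apply, coeffHexagon, Set.mem_ofPred_eq]

end StdTriangle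

section Hexagon

theorem abs_add_abs_le_iff {a b c : ℝ} : |a| + |b| ≤ c ↔ |a + b| ≤ c ∧ |a - b| ≤ c := by
  constructor
  · exact fun h ↦ ⟨(abs_add_le a b).trans h, (abs_sub a b).trans h⟩
  · rintro ⟨hadd, hsub⟩
    rw [abs_le] at hadd hsub
    cases abs_cases a <;> cases abs_cases b <;> linarith

theorem mk_preimage_coeffHexagon (s : ℝ) :
    Prod.mk s ⁻¹' coeffHexagon = {t | |s| ≤ 1 / 2 ∧ |s + 2 * t| ≤ 1 - |s|} := by
  ext t
  calc |s| + |t| + |s + t| ≤ 1 ↔ |s + t| + |t| ≤ 1 - |s| := by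
        constructor <;> intro h <;> linarith
    _ ↔ |s + t + t| ≤ 1 - |s| ∧ |s + t - t| ≤ 1 - |s| := abs_add_abs_le_iff
    _ ↔ |s| ≤ 1 / 2 ∧ |s + 2 * t| ≤ 1 - |s| := by
        rw [add_sub_cancel_right, and_comm, add_assoc, ← two_mul, le_sub_iff_add_le, ← two_mul,
          le_div_iff₀' two_pos]

theorem volume_mk_preimage_coeffHexagon (s : ℝ) :
    volume (Prod.mk s ⁻¹' coeffHexagon) =
      (Set.Icc (-(1 / 2) : ℝ) (1 / 2)).indicator (fun s ↦ ENNReal.ofReal (1 - |s|)) s := by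
  rw [mk_preimage_coeffHexagon]
  by_cases hs : |s| ≤ 1 / 2
  · have hslice : {t | |s| ≤ 1 / 2 ∧ |s + 2 * t| ≤ 1 - |s|} =
        Set.Icc ((-(1 - |s|) - s) / 2) ((1 - |s| - s) / 2) := by
      ext t
      rw [Set.mem_ofPred_eq, and_iff_right hs, abs_le, Set.mem_Icc, div_le_iff₀' two_pos,
        le_div_iff₀' two_pos, sub_le_iff_le_add', le_sub_iff_add_le' (b := 2 * t)]
    rw [hslice, Real.volume_Icc, Set.indicator_of_mem (Set.mem_Icc.2 (abs_le.1 hs))]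
    ring_nf
  · rw [Set.indicator_of_notMem (mt (fun h ↦ abs_le.2 (Set.mem_Icc.1 h)) hs)]
    simp only [hs, false_and, Set.ofPred_false, measure_empty]

theorem integral_neg_self_abs {a : ℝ} (ha : 0 ≤ a) : ∫ s in -a..a, |s| = a ^ 2 := by
  have hleft : ∫ s in -a..0, |s| = ∫ s in 0..a, |s| := by
    simpa using (intervalIntegral.integral_comp_neg (a := 0) (b := a) fun s : ℝ ↦ |s|).symm
  have hright : ∫ s in 0..a, |s| = ∫ s in 0..a, s :=
    intervalIntegral.integral_congr fun s hs ↦ abs_of_nonneg (Set.uIcc_of_le ha ▸ hs).1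
  rw [← intervalIntegral.integral_add_adjacent_intervals (b := 0)
    (continuous_abs.intervalIntegrable _ _) (continuous_abs.intervalIntegrable _ _), hleft, hright,
    integral_id]
  ring

theorem isClosed_coeffHexagon : IsClosed coeffHexagon :=
  isClosed_le (by fun_prop) (by fun_prop)

theorem volume_coeffHexagon : volume coeffHexagon = ENNReal.ofReal (3 / 4) := by
  have hcont : Continuous fun s : ℝ ↦ 1 - |s| := by fun_prop
  have hnonneg : 0 ≤ᵐ[volume.restrict (Set.Icc (-(1 / 2) : ℝ) (1 / 2))] fun s ↦ 1 - |s| := by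
    filter_upwards [ae_restrict_mem measurableSet_Icc] with s hs
    have := abs_le.2 hs
    simp only [Pi.zero_apply]
    linarith
  have hint : ∫ s in Set.Icc (-(1 / 2) : ℝ) (1 / 2), (1 - |s|) = 3 / 4 := by
    rw [integral_Icc_eq_integral_Ioc, ← intervalIntegral.integral_of_le (by norm_num),
      intervalIntegral.integral_sub (by simp) (continuous_abs.intervalIntegrable _ _),
      integral_neg_self_abs (by norm_num), intervalIntegral.integral_const]
    norm_num
  rw [Measure.volume_eq_prod, Measure.prod_apply isClosed_coeffHexagon.measurableSet]
  simp_rw [volume_mk_preimage_coeffHexagon]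
  rw [lintegral_indicator measurableSet_Icc, ← ofReal_integral_eq_lintegral_ofReal
    (hcont.continuousOn.integrableOn_compact isCompact_Icc) hnonneg, hint]

end Hexagon

theorem stmt1 (x y : ℝ) (hp : (x, y) ∈ stdTriangle) :
    volume (hilbertDualBall stdTriangle (x, y)) =
      ENNReal.ofReal (3 / (2 * x * y * (2 - x - y))) := by
  have hdet_pos : 0 < LinearMap.det (stdTriangleCoeffMap (x, y)) := by
    obtain ⟨hx, hy, hxy⟩ := hp
    have hz : 0 < 2 - x - y := by linarith
    rw [det_stdTriangleCoeffMap]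
    positivity
  rw [hilbertDualBall_stdTriangle hp, Measure.addHaar_preimage_linearMap _ hdet_pos.ne',
    abs_of_pos (inv_pos.2 hdet_pos), volume_coeffHexagon,
    ← ENNReal.ofReal_mul (inv_nonneg.2 hdet_pos.le), det_stdTriangleCoeffMap]
  congr 1
  field
end

section
/- Let t > 0, set s = 2t/(1+t), and let T ⊂ ℝ² be the interior of the convex hull of the three points (1,1), (1,0), (0,s). Then the Lebesgue integral ∫_T 3/(2xy(2−x−y)) d(x,y) equals (3/8)(π² + (log t)²). -/
open MeasureTheory Real

/-! Put `a = 1 - s` and slice `T` vertically at `x = 1 - z`. By partial fractions the slice integral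
is `3 / 2` times
`log ((1 - a² z²) / (1 - a²)) / (1 - z²) + (-2 log z) / (1 - z²)`.
Each summand is again an integral of an elementary rational kernel over an auxiliary parameter, from
`0` to `|a|` of `2 u / ((1 - u²) (1 - u² z²))` and from `0` to `∞` of
`2 w / ((1 + w²) (1 + w² z²))`; the two kernels correspond under `u = i w`. Integrating over `z`
first (Tonelli) gives the exact derivatives of `artanh² u` and `arctan² w`, so `T` contributes
`3 / 2 * (artanh² a + (π / 2)²)`, and `artanh a = -log t / 2`. -/

open Set Filter Topology

theorem lintegral_Ioo_of_hasDerivAt {f f' : ℝ → ℝ} {a b : ℝ} (hab : a ≤ b)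
    (hcont : ContinuousOn f (Icc a b)) (hderiv : ∀ x ∈ Ioo a b, HasDerivAt f (f' x) x)
    (hnonneg : ∀ x ∈ Ioo a b, 0 ≤ f' x) :
    ∫⁻ x in Ioo a b, ENNReal.ofReal (f' x) = ENNReal.ofReal (f b - f a) := by
  have hint : IntegrableOn f' (Ioc a b) :=
    intervalIntegral.integrableOn_deriv_of_nonneg hcont hderiv hnonneg
  rw [← intervalIntegral.integral_eq_sub_of_hasDerivAt_of_le hab hcont hderiv
      ((intervalIntegrable_iff_integrableOn_Ioc_of_le hab).2 hint),
    intervalIntegral.integral_of_le hab, integral_Ioc_eq_integral_Ioo,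
    ofReal_integral_eq_lintegral_ofReal (hint.mono_set Ioo_subset_Ioc_self)
      (ae_restrict_of_forall_mem measurableSet_Ioo hnonneg)]

theorem lintegral_Ioi_of_hasDerivAt {f f' : ℝ → ℝ} {a l : ℝ}
    (hcont : ContinuousWithinAt f (Ici a) a) (hderiv : ∀ x ∈ Ioi a, HasDerivAt f (f' x) x)
    (hnonneg : ∀ x ∈ Ioi a, 0 ≤ f' x) (hlim : Tendsto f atTop (𝓝 l)) :
    ∫⁻ x in Ioi a, ENNReal.ofReal (f' x) = ENNReal.ofReal (l - f a) := by
  rw [← integral_Ioi_of_hasDerivAt_of_nonneg hcont hderiv hnonneg hlim,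
    ofReal_integral_eq_lintegral_ofReal
      (integrableOn_Ioi_deriv_of_nonneg hcont hderiv hnonneg hlim)
      (ae_restrict_of_forall_mem measurableSet_Ioi hnonneg)]

theorem lintegral_Ioo_comp_const_sub (f : ℝ → ENNReal) (a b c : ℝ) :
    ∫⁻ x in Ioo (c - b) (c - a), f (c - x) = ∫⁻ x in Ioo a b, f x := by
  rw [← preimage_const_sub_Ioo, (volume.measurePreserving_sub_left c).setLIntegral_comp_preimage_emb
    (MeasurableEquiv.subLeft c).measurableEmbedding]

theorem lintegral_regionBetween {α : Type*} [MeasurableSpace α] {μ : Measure α} [SFinite μ]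
    {f g : α → ℝ} {s : Set α} (hf : Measurable f) (hg : Measurable g) (hs : MeasurableSet s)
    {F : α × ℝ → ENNReal} (hF : AEMeasurable F ((μ.prod volume).restrict (regionBetween f g s))) :
    ∫⁻ p in regionBetween f g s, F p ∂μ.prod volume =
      ∫⁻ x in s, (∫⁻ y in Ioo (f x) (g x), F (x, y)) ∂μ := by
  have hR := measurableSet_regionBetween hf hg hs
  rw [← lintegral_indicator hR, lintegral_prod _ ((aemeasurable_indicator_iff hR).2 hF),
    ← lintegral_indicator hs]
  refine lintegral_congr fun x => ?_
  classical
  by_cases hx : x ∈ s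
  · have hmem (y : ℝ) : (x, y) ∈ regionBetween f g s ↔ y ∈ Ioo (f x) (g x) := and_iff_right hx
    simp only [indicator_of_mem hx, ← lintegral_indicator measurableSet_Ioo, indicator_apply, hmem]
  · simp [regionBetween, hx]

theorem artanh_neg_eq_neg_artanh (x : ℝ) : artanh (-x) = -artanh x := by
  rw [artanh, artanh, ← log_inv, ← sqrt_inv, inv_div, sub_neg_eq_add, ← sub_eq_add_neg]

theorem artanh_abs_sq (x : ℝ) : artanh |x| ^ 2 = artanh x ^ 2 := by
  rcases abs_choice x with h | h <;> rw [h]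
  rw [artanh_neg_eq_neg_artanh, neg_sq]

theorem hasDerivAt_artanh {x : ℝ} (hx : x ∈ Ioo (-1) 1) :
    HasDerivAt artanh (1 / (1 - x ^ 2)) x := by
  have hadd : 0 < 1 + x := by linarith [hx.1]
  have hsub : 0 < 1 - x := by linarith [hx.2]
  have hderiv : HasDerivAt (fun y => 1 / 2 * (log (1 + y) - log (1 - y))) (1 / (1 - x ^ 2)) x := by
    refine (((((hasDerivAt_id x).const_add 1).log hadd.ne').sub
      (((hasDerivAt_id x).const_sub 1).log hsub.ne')).const_mul (1 / 2)).congr_deriv ?_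
    rw [show 1 - x ^ 2 = (1 + x) * (1 - x) by ring]
    simp only [id]
    field_simp
    ring
  refine hderiv.congr_of_eventuallyEq ?_
  filter_upwards [Ioo_mem_nhds hx.1 hx.2] with y hy
  rw [artanh_eq_half_log (Ioo_subset_Icc_self hy),
    log_div (by linarith [hy.1]) (by linarith [hy.2])]

theorem one_sub_sq_mul_sq_pos {u z : ℝ} (hu : u ∈ Ioo (-1) 1) (hz : z ∈ Icc (-1) 1) :
    0 < 1 - u ^ 2 * z ^ 2 := by
  have hu2 : u ^ 2 < 1 := (sq_lt_one_iff_abs_lt_one u).2 (abs_lt.2 hu)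
  have hz2 : z ^ 2 ≤ 1 := (sq_le_one_iff_abs_le_one z).2 (abs_le.2 hz)
  nlinarith [sq_nonneg u, sq_nonneg z]

theorem one_sub_sq_pos {u : ℝ} (hu : u ∈ Ioo (-1) 1) : 0 < 1 - u ^ 2 :=
  sub_pos.2 ((sq_lt_one_iff_abs_lt_one u).2 (abs_lt.2 hu))

/-- The kernel whose integral over `u` is the `a`-dependent part of a slice of the triangle, and
whose integral over `z` is the derivative of `artanh²`. -/
noncomputable def hyperbolicKernel (u z : ℝ) : ℝ :=
  2 * u / ((1 - u ^ 2) * (1 - u ^ 2 * z ^ 2))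

/-- The counterpart of `hyperbolicKernel` at imaginary `u`: its integral over `w` is the part of a
slice that does not depend on `a`, and its integral over `z` is the derivative of `arctan²`. -/
noncomputable def circularKernel (w z : ℝ) : ℝ :=
  2 * w / ((1 + w ^ 2) * (1 + w ^ 2 * z ^ 2))

theorem hyperbolicKernel_nonneg {u z : ℝ} (hu : u ∈ Ico 0 1) (hz : z ∈ Icc (-1) 1) :
    0 ≤ hyperbolicKernel u z := by
  have hu1 : u ∈ Ioo (-1) 1 := ⟨by linarith [hu.1], hu.2⟩
  exact div_nonneg (mul_nonneg zero_le_two hu.1)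
    (mul_pos (one_sub_sq_pos hu1) (one_sub_sq_mul_sq_pos hu1 hz)).le

theorem circularKernel_nonneg {w : ℝ} (hw : 0 ≤ w) (z : ℝ) : 0 ≤ circularKernel w z := by
  unfold circularKernel
  positivity

theorem lintegral_hyperbolicKernel_right {u : ℝ} (hu : u ∈ Ico 0 1) :
    ∫⁻ z in Ioo (0 : ℝ) 1, ENNReal.ofReal (hyperbolicKernel u z) =
      ENNReal.ofReal (2 * artanh u / (1 - u ^ 2)) := by
  have hderiv : ∀ z ∈ Icc (0 : ℝ) 1,
      HasDerivAt (fun z => 2 * artanh (u * z) / (1 - u ^ 2)) (hyperbolicKernel u z) z := by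
    intro z hz
    have huz : u * z ∈ Ioo (-1) 1 :=
      ⟨by nlinarith [hu.1, hz.1], by nlinarith [hu.1, hu.2, hz.1, hz.2]⟩
    refine ((((hasDerivAt_artanh huz).comp z ((hasDerivAt_id z).const_mul u)).const_mul 2).div_const
      (1 - u ^ 2)).congr_deriv ?_
    rw [hyperbolicKernel, mul_pow]
    field_simp
  rw [lintegral_Ioo_of_hasDerivAt zero_le_one (HasDerivAt.continuousOn hderiv)
    (fun z hz => hderiv z (Ioo_subset_Icc_self hz))
    (fun z hz => hyperbolicKernel_nonneg hu ⟨by linarith [hz.1], hz.2.le⟩)]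
  simp

theorem lintegral_circularKernel_right {w : ℝ} (hw : 0 ≤ w) :
    ∫⁻ z in Ioo (0 : ℝ) 1, ENNReal.ofReal (circularKernel w z) =
      ENNReal.ofReal (2 * arctan w / (1 + w ^ 2)) := by
  have hderiv (z : ℝ) :
      HasDerivAt (fun z => 2 * arctan (w * z) / (1 + w ^ 2)) (circularKernel w z) z := by
    refine ((((hasDerivAt_id z).const_mul w).arctan.const_mul 2).div_const
      (1 + w ^ 2)).congr_deriv ?_
    simp only [id]
    rw [circularKernel, mul_pow]
    field_simp
  rw [lintegral_Ioo_of_hasDerivAt zero_le_one (HasDerivAt.continuousOn fun z _ => hderiv z)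
    (fun z _ => hderiv z) (fun z _ => circularKernel_nonneg hw z)]
  simp

theorem lintegral_hyperbolicKernel_left {a z : ℝ} (ha : a ∈ Ico 0 1) (hz : z ∈ Ioo (-1) 1) :
    ∫⁻ u in Ioo 0 a, ENNReal.ofReal (hyperbolicKernel u z) =
      ENNReal.ofReal (log ((1 - a ^ 2 * z ^ 2) / (1 - a ^ 2)) / (1 - z ^ 2)) := by
  have hz2 : 0 < 1 - z ^ 2 := one_sub_sq_pos hz
  have hpos : ∀ u ∈ Icc 0 a, 0 < 1 - u ^ 2 * z ^ 2 ∧ 0 < 1 - u ^ 2 := by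
    intro u hu
    have hu1 : u ∈ Ioo (-1) 1 := ⟨by linarith [hu.1], hu.2.trans_lt ha.2⟩
    exact ⟨one_sub_sq_mul_sq_pos hu1 (Ioo_subset_Icc_self hz), one_sub_sq_pos hu1⟩
  have hderiv : ∀ u ∈ Icc 0 a,
      HasDerivAt (fun u => (log (1 - u ^ 2 * z ^ 2) - log (1 - u ^ 2)) / (1 - z ^ 2))
        (hyperbolicKernel u z) u := by
    intro u hu
    obtain ⟨huz, hu2⟩ := hpos u hu
    have hsq : HasDerivAt (fun u : ℝ => u ^ 2) (2 * u) u := by simpa using hasDerivAt_pow 2 u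
    refine ((((hsq.mul_const (z ^ 2)).const_sub 1).log huz.ne').sub
      ((hsq.const_sub 1).log hu2.ne')).div_const (1 - z ^ 2) |>.congr_deriv ?_
    unfold hyperbolicKernel
    field_simp
    ring
  obtain ⟨haz, ha2⟩ := hpos a (right_mem_Icc.2 ha.1)
  rw [lintegral_Ioo_of_hasDerivAt ha.1 (HasDerivAt.continuousOn hderiv)
    (fun u hu => hderiv u (Ioo_subset_Icc_self hu))
    (fun u hu => hyperbolicKernel_nonneg ⟨hu.1.le, hu.2.trans ha.2⟩ (Ioo_subset_Icc_self hz)),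
    log_div haz.ne' ha2.ne']
  simp

theorem lintegral_circularKernel_left {z : ℝ} (hz : z ∈ Ioo 0 1) :
    ∫⁻ w in Ioi (0 : ℝ), ENNReal.ofReal (circularKernel w z) =
      ENNReal.ofReal (-2 * log z / (1 - z ^ 2)) := by
  have hz0 : 0 < z := hz.1
  have hz2 : 0 < 1 - z ^ 2 := one_sub_sq_pos ⟨by linarith, hz.2⟩
  have hderiv (w : ℝ) :
      HasDerivAt (fun w => log ((1 + w ^ 2) / (1 + w ^ 2 * z ^ 2)) / (1 - z ^ 2))
        (circularKernel w z) w := by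
    have hsq : HasDerivAt (fun w : ℝ => w ^ 2) (2 * w) w := by simpa using hasDerivAt_pow 2 w
    have hw2 : 0 < 1 + w ^ 2 := by positivity
    have hwz : 0 < 1 + w ^ 2 * z ^ 2 := by positivity
    refine ((((hsq.const_add 1).fun_div ((hsq.mul_const (z ^ 2)).const_add 1) hwz.ne').log
      (div_pos hw2 hwz).ne').div_const (1 - z ^ 2)).congr_deriv ?_
    unfold circularKernel
    field_simp
    ring
  have hlim : Tendsto (fun w : ℝ => (1 + w ^ 2) / (1 + w ^ 2 * z ^ 2)) atTop (𝓝 ((z ^ 2)⁻¹)) := by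
    have hinv : Tendsto (fun w : ℝ => (w ^ 2)⁻¹) atTop (𝓝 0) :=
      (tendsto_pow_atTop two_ne_zero).inv_tendsto_atTop
    have hquot := (hinv.add_const 1).div (hinv.add_const (z ^ 2)) (by positivity)
    rw [zero_add, zero_add, one_div] at hquot
    refine hquot.congr' ?_
    filter_upwards [eventually_gt_atTop 0] with w hw
    simp only [Pi.div_apply]
    field_simp
  rw [lintegral_Ioi_of_hasDerivAt (hderiv 0).continuousAt.continuousWithinAt (fun w _ => hderiv w)
    (fun w hw => circularKernel_nonneg (mem_Ioi.1 hw).le z)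
    ((hlim.log (by positivity)).div_const (1 - z ^ 2))]
  simp [log_inv]

theorem lintegral_deriv_artanh_sq {a : ℝ} (ha : a ∈ Ico 0 1) :
    ∫⁻ u in Ioo 0 a, ENNReal.ofReal (2 * artanh u / (1 - u ^ 2)) =
      ENNReal.ofReal (artanh a ^ 2) := by
  have hderiv : ∀ u ∈ Icc 0 a,
      HasDerivAt (fun u => artanh u ^ 2) (2 * artanh u / (1 - u ^ 2)) u := by
    intro u hu
    refine ((hasDerivAt_artanh ⟨by linarith [hu.1], by linarith [hu.2, ha.2]⟩).pow 2).congr_deriv ?_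
    simp only [Nat.cast_ofNat, Nat.add_one_sub_one, pow_one]
    ring
  rw [lintegral_Ioo_of_hasDerivAt ha.1 (HasDerivAt.continuousOn hderiv)
    (fun u hu => hderiv u (Ioo_subset_Icc_self hu))]
  · simp
  · intro u hu
    have hartanh : 0 ≤ artanh u := artanh_nonneg hu.1.le
    have hsub : 0 ≤ 1 - u ^ 2 := (one_sub_sq_pos ⟨by linarith [hu.1], hu.2.trans ha.2⟩).le
    positivity

theorem lintegral_deriv_arctan_sq :
    ∫⁻ w in Ioi (0 : ℝ), ENNReal.ofReal (2 * arctan w / (1 + w ^ 2)) =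
      ENNReal.ofReal (π ^ 2 / 4) := by
  have hderiv (w : ℝ) : HasDerivAt (fun w => arctan w ^ 2) (2 * arctan w / (1 + w ^ 2)) w := by
    refine ((hasDerivAt_arctan w).pow 2).congr_deriv ?_
    simp only [Nat.cast_ofNat, Nat.add_one_sub_one, pow_one]
    ring
  rw [lintegral_Ioi_of_hasDerivAt (hderiv 0).continuousAt.continuousWithinAt
    (fun w _ => hderiv w) (l := (π / 2) ^ 2)]
  · congr 1
    rw [arctan_zero]
    ring
  · intro w hw
    have harctan : 0 ≤ arctan w := arctan_nonneg.2 (mem_Ioi.1 hw).le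
    positivity
  · exact (tendsto_arctan_atTop.mono_right nhdsWithin_le_nhds).pow 2

theorem lintegral_log_div_one_sub_sq {a : ℝ} (ha : a ∈ Ioo (-1) 1) :
    ∫⁻ z in Ioo (0 : ℝ) 1,
        ENNReal.ofReal (log ((1 - a ^ 2 * z ^ 2) / (1 - a ^ 2)) / (1 - z ^ 2)) =
      ENNReal.ofReal (artanh a ^ 2) := by
  have habs : |a| ∈ Ico 0 1 := ⟨abs_nonneg a, abs_lt.2 ha⟩
  rw [← sq_abs a, ← artanh_abs_sq]
  calc
    _ = ∫⁻ z in Ioo (0 : ℝ) 1, ∫⁻ u in Ioo 0 |a|, ENNReal.ofReal (hyperbolicKernel u z) :=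
      setLIntegral_congr_fun measurableSet_Ioo fun z hz =>
        (lintegral_hyperbolicKernel_left habs ⟨by linarith [hz.1], hz.2⟩).symm
    _ = ∫⁻ u in Ioo 0 |a|, ∫⁻ z in Ioo (0 : ℝ) 1, ENNReal.ofReal (hyperbolicKernel u z) :=
      lintegral_lintegral_swap (by unfold hyperbolicKernel Function.uncurry; fun_prop)
    _ = ∫⁻ u in Ioo 0 |a|, ENNReal.ofReal (2 * artanh u / (1 - u ^ 2)) :=
      setLIntegral_congr_fun measurableSet_Ioo fun u hu =>
        lintegral_hyperbolicKernel_right ⟨hu.1.le, hu.2.trans habs.2⟩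
    _ = _ := lintegral_deriv_artanh_sq habs

theorem lintegral_neg_two_mul_log_div_one_sub_sq :
    ∫⁻ z in Ioo (0 : ℝ) 1, ENNReal.ofReal (-2 * log z / (1 - z ^ 2)) =
      ENNReal.ofReal (π ^ 2 / 4) := by
  calc
    _ = ∫⁻ z in Ioo (0 : ℝ) 1, ∫⁻ w in Ioi (0 : ℝ), ENNReal.ofReal (circularKernel w z) :=
      setLIntegral_congr_fun measurableSet_Ioo fun z hz => (lintegral_circularKernel_left hz).symm
    _ = ∫⁻ w in Ioi (0 : ℝ), ∫⁻ z in Ioo (0 : ℝ) 1, ENNReal.ofReal (circularKernel w z) :=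
      lintegral_lintegral_swap (by unfold circularKernel Function.uncurry; fun_prop)
    _ = ∫⁻ w in Ioi (0 : ℝ), ENNReal.ofReal (2 * arctan w / (1 + w ^ 2)) :=
      setLIntegral_congr_fun measurableSet_Ioi fun w hw =>
        lintegral_circularKernel_right (mem_Ioi.1 hw).le
    _ = _ := lintegral_deriv_arctan_sq

/-- The area of the dual unit ball at `q` of the Hilbert metric of the triangle with vertices
`(0, 0)`, `(2, 0)`, `(0, 2)`; a point of the plane is encoded as a pair. -/
noncomputable def dualBallArea (q : ℝ × ℝ) : ℝ :=
  3 / (2 * q.1 * q.2 * (2 - q.1 - q.2))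

/-- The open triangle `T` inscribed in the standard triangle, with one vertex on each side. The
parameter is the height `s = 2t / (1 + t)` of the vertex on the `y`-axis. -/
def inscribedTriangle (s : ℝ) : Set (ℝ × ℝ) :=
  interior (convexHull ℝ {(1, 1), (1, 0), (0, s)})

theorem affineIndependent_inscribedTriangle_vertices (s : ℝ) :
    AffineIndependent ℝ ![((1 : ℝ), (1 : ℝ)), (1, 0), (0, s)] := by
  rw [affineIndependent_iff_of_fintype]
  intro w hw hsum
  rw [Finset.weightedVSub_eq_weightedVSubOfPoint_of_sum_eq_zero _ _ _ hw 0] at hsum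
  simp only [Fin.sum_univ_three, Finset.weightedVSubOfPoint_apply, Prod.ext_iff, vsub_eq_sub,
    sub_zero, Matrix.cons_val, Prod.fst_add, Prod.snd_add, Prod.smul_mk, Prod.fst_zero,
    Prod.snd_zero, smul_eq_mul, mul_one, mul_zero, add_zero] at hw hsum
  have h2 : w 2 = 0 := by linarith
  rw [h2, zero_mul, add_zero] at hsum
  intro i
  fin_cases i
  exacts [by dsimp; linarith, by dsimp; linarith, h2]

/-- The vertices of `inscribedTriangle s` as an affine basis of the plane. Its barycentric
coordinates cut out the triangle. -/
noncomputable def vertexBasis (s : ℝ) : AffineBasis (Fin 3) ℝ (ℝ × ℝ) where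
  toFun := ![(1, 1), (1, 0), (0, s)]
  ind' := affineIndependent_inscribedTriangle_vertices s
  tot' := by
    rw [(affineIndependent_inscribedTriangle_vertices s
      ).affineSpan_eq_top_iff_card_eq_finrank_add_one]
    simp

theorem coe_vertexBasis (s : ℝ) : ⇑(vertexBasis s) = ![(1, 1), (1, 0), (0, s)] := rfl

theorem range_vertexBasis (s : ℝ) : range (vertexBasis s) = {(1, 1), (1, 0), (0, s)} := by
  simp only [coe_vertexBasis, Matrix.range_cons, Matrix.range_empty, union_empty,
    singleton_union]

theorem vertexBasis_coord (s : ℝ) (q : ℝ × ℝ) (i : Fin 3) :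
    (vertexBasis s).coord i q = ![q.2 - s * (1 - q.1), s * (1 - q.1) + q.1 - q.2, 1 - q.1] i := by
  have hone := (vertexBasis s).sum_coord_apply_eq_one q
  have hcomb := (vertexBasis s).linear_combination_coord_eq_self q
  simp only [coe_vertexBasis, Prod.ext_iff, Fin.sum_univ_three, Matrix.cons_val, Prod.fst_add,
    Prod.snd_add, Prod.smul_mk, smul_eq_mul, mul_one, mul_zero, add_zero] at hone hcomb
  have h2 : (vertexBasis s).coord 2 q = 1 - q.1 := by linarith
  rw [h2] at hcomb
  fin_cases i
  exacts [by dsimp; linarith, by dsimp; linarith, h2]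

theorem inscribedTriangle_eq_regionBetween (s : ℝ) :
    inscribedTriangle s =
      regionBetween (fun x => s * (1 - x)) (fun x => s * (1 - x) + x) (Ioo 0 1) := by
  rw [inscribedTriangle, ← range_vertexBasis, AffineBasis.interior_convexHull]
  ext q
  simp only [regionBetween, mem_ofPred_eq, vertexBasis_coord, Fin.forall_fin_succ, mem_Ioo,
    Matrix.cons_val_zero, Matrix.cons_val_succ, IsEmpty.forall_iff, and_true]
  constructor
  · rintro ⟨h0, h1, h2⟩
    exact ⟨⟨by linarith, by linarith⟩, by linarith, by linarith⟩
  · rintro ⟨⟨-, hx⟩, hlower, hupper⟩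
    exact ⟨by linarith, by linarith, by linarith⟩

theorem lintegral_Ioo_inv_mul_const_sub {c l u : ℝ} (hl : 0 < l) (hlu : l ≤ u) (huc : u < c) :
    ∫⁻ y in Ioo l u, ENNReal.ofReal (1 / (y * (c - y))) =
      ENNReal.ofReal (log (u * (c - l) / (l * (c - u))) / c) := by
  have hpos : ∀ y ∈ Icc l u, 0 < y ∧ 0 < c - y := fun y hy =>
    ⟨hl.trans_le hy.1, sub_pos.2 (hy.2.trans_lt huc)⟩
  have hderiv : ∀ y ∈ Icc l u,
      HasDerivAt (fun y => (log y - log (c - y)) / c) (1 / (y * (c - y))) y := by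
    intro y hy
    obtain ⟨hy0, hyc⟩ := hpos y hy
    have hc : c ≠ 0 := by linarith
    refine (((hasDerivAt_log hy0.ne').sub (((hasDerivAt_id y).const_sub c).log hyc.ne')).div_const c
      ).congr_deriv ?_
    simp only [id]
    field_simp
    ring
  rw [lintegral_Ioo_of_hasDerivAt hlu (HasDerivAt.continuousOn hderiv)
    (fun y hy => hderiv y (Ioo_subset_Icc_self hy))]
  · obtain ⟨hl0, hcl⟩ := hpos l (left_mem_Icc.2 hlu)
    obtain ⟨hu0, hcu⟩ := hpos u (right_mem_Icc.2 hlu)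
    rw [log_div (by positivity) (by positivity), log_mul hu0.ne' hcl.ne', log_mul hl0.ne' hcu.ne']
    ring_nf
  · intro y hy
    obtain ⟨hy0, hyc⟩ := hpos y (Ioo_subset_Icc_self hy)
    positivity

theorem measurable_dualBallArea : Measurable dualBallArea := by
  unfold dualBallArea
  fun_prop

theorem dualBallArea_nonneg {s : ℝ} (hs : s ∈ Ioo 0 2) {q : ℝ × ℝ} (hq : q ∈ inscribedTriangle s) :
    0 ≤ dualBallArea q := by
  rw [inscribedTriangle_eq_regionBetween] at hq
  obtain ⟨⟨hx0, hx1⟩, hy0, hy1⟩ := hq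
  have hy : 0 < q.2 := by nlinarith [hs.1]
  have hxy : 0 < 2 - q.1 - q.2 := by nlinarith [hs.2]
  unfold dualBallArea
  positivity

theorem lintegral_dualBallArea_slice {s z : ℝ} (hs : s ∈ Ioo 0 2) (hz : z ∈ Ioo 0 1) :
    ∫⁻ y in Ioo (s * z) (s * z + (1 - z)), ENNReal.ofReal (dualBallArea (1 - z, y)) =
      ENNReal.ofReal (3 / 2) *
        (ENNReal.ofReal (log ((1 - (1 - s) ^ 2 * z ^ 2) / (1 - (1 - s) ^ 2)) / (1 - z ^ 2)) +
          ENNReal.ofReal (-2 * log z / (1 - z ^ 2))) := by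
  have hz0 : 0 < z := hz.1
  have hz1 : 0 < 1 - z := by linarith [hz.2]
  have hz2 : 0 < 1 - z ^ 2 := one_sub_sq_pos ⟨by linarith, hz.2⟩
  have ha : 0 < 1 - (1 - s) ^ 2 := one_sub_sq_pos ⟨by linarith [hs.2], by linarith [hs.1]⟩
  have haz : 1 - (1 - s) ^ 2 ≤ 1 - (1 - s) ^ 2 * z ^ 2 := by nlinarith [sq_nonneg (1 - s)]
  have hfactor (y : ℝ) :
      dualBallArea (1 - z, y) = 3 / (2 * (1 - z)) * (1 / (y * (1 + z - y))) := by
    rw [dualBallArea, div_mul_div_comm, mul_one]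
    ring_nf
  have hratio : (s * z + (1 - z)) * (1 + z - s * z) / (s * z * (1 + z - (s * z + (1 - z)))) =
      (1 - (1 - s) ^ 2 * z ^ 2) / (1 - (1 - s) ^ 2) / z ^ 2 := by
    rw [div_div]
    ring_nf
  have hcoef : 0 ≤ 3 / (2 * (1 - z)) := by positivity
  have hlog : 0 ≤ log ((1 - (1 - s) ^ 2 * z ^ 2) / (1 - (1 - s) ^ 2)) :=
    log_nonneg ((one_le_div ha).2 haz)
  have hlogz : log z ≤ 0 := log_nonpos hz0.le hz.2.le
  simp only [hfactor, ENNReal.ofReal_mul hcoef]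
  rw [lintegral_const_mul' _ _ ENNReal.ofReal_ne_top,
    lintegral_Ioo_inv_mul_const_sub (mul_pos hs.1 hz0) (by linarith) (by nlinarith [hs.2]), hratio,
    log_div (div_pos (ha.trans_le haz) ha).ne' (by positivity), log_pow, ← ENNReal.ofReal_mul hcoef,
    ← ENNReal.ofReal_add (by positivity) (div_nonneg (by linarith) hz2.le),
    ← ENNReal.ofReal_mul (by norm_num)]
  congr 1
  rw [show 1 - z ^ 2 = (1 - z) * (1 + z) by ring]
  field_simp
  push_cast
  ring

theorem lintegral_inscribedTriangle {s : ℝ} (hs : s ∈ Ioo 0 2) :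
    ∫⁻ q in inscribedTriangle s, ENNReal.ofReal (dualBallArea q) =
      ENNReal.ofReal (3 / 2 * (artanh (1 - s) ^ 2 + π ^ 2 / 4)) := by
  have ha : 1 - s ∈ Ioo (-1) 1 := ⟨by linarith [hs.2], by linarith [hs.1]⟩
  calc
    _ = ∫⁻ x in Ioo (0 : ℝ) 1, ∫⁻ y in Ioo (s * (1 - x)) (s * (1 - x) + x),
          ENNReal.ofReal (dualBallArea (x, y)) := by
      rw [inscribedTriangle_eq_regionBetween, Measure.volume_eq_prod,
        lintegral_regionBetween (by fun_prop) (by fun_prop) measurableSet_Ioo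
          measurable_dualBallArea.ennreal_ofReal.aemeasurable]
    _ = ∫⁻ z in Ioo (0 : ℝ) 1, ∫⁻ y in Ioo (s * z) (s * z + (1 - z)),
          ENNReal.ofReal (dualBallArea (1 - z, y)) := by
      simpa using lintegral_Ioo_comp_const_sub (fun z => ∫⁻ y in Ioo (s * z) (s * z + (1 - z)),
        ENNReal.ofReal (dualBallArea (1 - z, y))) 0 1 1
    _ = ENNReal.ofReal (3 / 2) *
          ((∫⁻ z in Ioo (0 : ℝ) 1, ENNReal.ofReal
              (log ((1 - (1 - s) ^ 2 * z ^ 2) / (1 - (1 - s) ^ 2)) / (1 - z ^ 2))) +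
            ∫⁻ z in Ioo (0 : ℝ) 1, ENNReal.ofReal (-2 * log z / (1 - z ^ 2))) := by
      rw [setLIntegral_congr_fun measurableSet_Ioo fun z hz => lintegral_dualBallArea_slice hs hz,
        lintegral_const_mul' _ _ ENNReal.ofReal_ne_top, lintegral_add_right _ (by fun_prop)]
    _ = _ := by
      rw [lintegral_log_div_one_sub_sq ha, lintegral_neg_two_mul_log_div_one_sub_sq,
        ← ENNReal.ofReal_add (sq_nonneg _) (by positivity), ← ENNReal.ofReal_mul (by norm_num)]

theorem integral_inscribedTriangle {s : ℝ} (hs : s ∈ Ioo 0 2) :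
    ∫ q in inscribedTriangle s, dualBallArea q = 3 / 2 * (artanh (1 - s) ^ 2 + π ^ 2 / 4) := by
  have hT : MeasurableSet (inscribedTriangle s) := isOpen_interior.measurableSet
  rw [integral_eq_lintegral_of_nonneg_ae
      (ae_restrict_of_forall_mem hT fun q => dualBallArea_nonneg hs)
      measurable_dualBallArea.aestronglyMeasurable,
    lintegral_inscribedTriangle hs, ENNReal.toReal_ofReal (by positivity)]

theorem artanh_one_sub_div_one_add {t : ℝ} (ht : 0 < t) :
    artanh ((1 - t) / (1 + t)) = -(log t / 2) := by
  have ht1 : 0 < 1 + t := by linarith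
  have hquot : (1 + (1 - t) / (1 + t)) / (1 - (1 - t) / (1 + t)) = t⁻¹ := by
    rw [one_add_div ht1.ne', one_sub_div ht1.ne', div_div_div_cancel_right₀ ht1.ne']
    ring_nf
  rw [artanh, hquot, sqrt_inv, log_inv, log_sqrt ht.le]

theorem stmt2 (t : ℝ) (ht : 0 < t) :
    (∫ q in interior (convexHull ℝ
        ({((1 : ℝ), (1 : ℝ)), ((1 : ℝ), (0 : ℝ)), ((0 : ℝ), 2 * t / (1 + t))} : Set (ℝ × ℝ))),
      3 / (2 * q.1 * q.2 * (2 - q.1 - q.2))) =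
    (3 / 8) * (π ^ 2 + Real.log t ^ 2) := by
  have hs : 2 * t / (1 + t) ∈ Ioo 0 2 :=
    ⟨by positivity, by rw [div_lt_iff₀ (by positivity)]; linarith⟩
  have hone_sub : 1 - 2 * t / (1 + t) = (1 - t) / (1 + t) := by
    field_simp
    ring
  calc
    _ = 3 / 2 * (artanh (1 - 2 * t / (1 + t)) ^ 2 + π ^ 2 / 4) := integral_inscribedTriangle hs
    _ = 3 / 8 * (π ^ 2 + log t ^ 2) := by
      rw [hone_sub, artanh_one_sub_div_one_add ht]
      ring
end

section
/- The Lebesgue integral of the function (x,y) ↦ 1/(x·y·(2−x−y)) over the open region {(x,y) ∈ ℝ² : 0 < x < 1 and 1−x < y < 1} equals π²/4. -/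
open MeasureTheory Real

/-!
Integrate the variable `y` out by Tonelli. Partial fractions give
`∫ dy / (x y (2 - x - y)) = -2 log (1 - x) / (x (2 - x))` over `1 - x < y < 1`, and since
`x (2 - x) = 1 - (1 - x)²`, the substitution `u = 1 - x` leaves `2 ∫₀¹ -log u / (1 - u²) du`.
Expanding the geometric series and integrating term by term yields `2 ∑ 1 / (2n + 1)²`, which is
`2 (1 - 1/4) ζ(2) = π² / 4`. All integrands are nonnegative, so in terms of lower Lebesgue
integrals both interchanges are unconditional.
-/

section LIntegral

open Set

theorem setLIntegral_regionBetween {α : Type*} [MeasurableSpace α] {μ : Measure α}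
    {ν : Measure ℝ} [SFinite ν] {f g : α → ℝ} {s : Set α} (hf : Measurable f) (hg : Measurable g)
    (hs : MeasurableSet s) {F : α × ℝ → ENNReal} (hF : Measurable F) :
    ∫⁻ p in regionBetween f g s, F p ∂μ.prod ν =
      ∫⁻ x in s, ∫⁻ y in Ioo (f x) (g x), F (x, y) ∂ν ∂μ := by
  have hR := measurableSet_regionBetween hf hg hs
  rw [← lintegral_indicator hR, lintegral_prod _ (hF.indicator hR).aemeasurable,
    ← lintegral_indicator hs]
  refine lintegral_congr fun x => ?_
  by_cases hx : x ∈ s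
  · rw [indicator_of_mem hx, ← lintegral_indicator measurableSet_Ioo]
    simp only [indicator, regionBetween, mem_ofPred_eq, hx, true_and]
  · simp [indicator, regionBetween, hx]

theorem setLIntegral_Ioo_comp_sub_left (f : ℝ → ENNReal) (a b c : ℝ) :
    ∫⁻ x in Ioo a b, f (c - x) = ∫⁻ x in Ioo (c - b) (c - a), f x := by
  have h := (volume.measurePreserving_sub_left c).setLIntegral_comp_preimage_emb
    (MeasurableEquiv.subLeft c).measurableEmbedding f (Ioo (c - b) (c - a))
  simpa using h

theorem setLIntegral_Ioo_ofReal_eq_sub_of_hasDerivAt_of_nonneg {F f : ℝ → ℝ} {a b : ℝ}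
    (hab : a ≤ b) (hcont : ContinuousOn F (Icc a b))
    (hderiv : ∀ x ∈ Ioo a b, HasDerivAt F (f x) x) (hnonneg : ∀ x ∈ Ioo a b, 0 ≤ f x) :
    ∫⁻ x in Ioo a b, ENNReal.ofReal (f x) = ENNReal.ofReal (F b - F a) := by
  have hint : IntegrableOn f (Ioc a b) :=
    intervalIntegral.integrableOn_deriv_of_nonneg hcont hderiv hnonneg
  have hFTC : ∫ x in a..b, f x = F b - F a :=
    intervalIntegral.integral_eq_sub_of_hasDerivAt_of_le hab hcont hderiv
      ((intervalIntegrable_iff_integrableOn_Ioc_of_le hab).2 hint)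
  rw [← hFTC, intervalIntegral.integral_of_le hab, integral_Ioc_eq_integral_Ioo,
    ofReal_integral_eq_lintegral_ofReal (hint.mono_set Ioo_subset_Ioc_self)]
  exact ae_restrict_of_forall_mem measurableSet_Ioo hnonneg

theorem setLIntegral_Ioo_one_div_mul_sub {a b c : ℝ} (ha : 0 < a) (hab : a ≤ b) (hbc : b < c) :
    ∫⁻ y in Ioo a b, ENNReal.ofReal (1 / (y * (c - y))) =
      ENNReal.ofReal ((log (b / (c - b)) - log (a / (c - a))) / c) := by
  have hc : 0 < c := by linarith
  have hderiv : ∀ y ∈ Icc a b,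
      HasDerivAt (fun y => log (y / (c - y)) / c) (1 / (y * (c - y))) y := by
    intro y hy
    have hy₀ : y ≠ 0 := (ha.trans_le hy.1).ne'
    have hcy : c - y ≠ 0 := (sub_pos.2 (hy.2.trans_lt hbc)).ne'
    have h := (((hasDerivAt_id' y).fun_div ((hasDerivAt_id' y).const_sub c) hcy).log
      (div_ne_zero hy₀ hcy)).div_const c
    refine h.congr_deriv ?_
    field_simp
    ring
  rw [setLIntegral_Ioo_ofReal_eq_sub_of_hasDerivAt_of_nonneg hab
    (fun y hy => (hderiv y hy).continuousAt.continuousWithinAt)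
    (fun y hy => hderiv y (Ioo_subset_Icc_self hy)), sub_div]
  intro y hy
  have hy₀ : 0 < y := ha.trans hy.1
  have hcy : 0 < c - y := sub_pos.2 (hy.2.trans hbc)
  positivity

theorem continuousOn_rpow_mul_log {r : ℝ} (hr : 0 < r) :
    ContinuousOn (fun x => x ^ r * log x) (Ici 0) := by
  intro x hx
  rcases (mem_Ici.1 hx).eq_or_lt with rfl | hx
  · rw [← continuousWithinAt_Ioi_iff_Ici, ContinuousWithinAt]
    simpa [mul_comm] using tendsto_log_mul_rpow_nhdsGT_zero hr
  · exact ((continuousAt_rpow_const x r (.inl hx.ne')).mul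
      (continuousAt_log hx.ne')).continuousWithinAt

theorem setLIntegral_Ioo_zero_one_neg_log_mul_rpow {s : ℝ} (hs : -1 < s) :
    ∫⁻ x in Ioo (0 : ℝ) 1, ENNReal.ofReal (-log x * x ^ s) =
      ENNReal.ofReal (1 / (s + 1) ^ 2) := by
  have hs' : 0 < s + 1 := by linarith
  rw [setLIntegral_Ioo_ofReal_eq_sub_of_hasDerivAt_of_nonneg
    (F := fun x => x ^ (s + 1) / (s + 1) ^ 2 - x ^ (s + 1) * log x / (s + 1)) zero_le_one]
  · simp [hs'.ne']
  · exact (((continuous_rpow_const hs'.le).continuousOn).div_const _).sub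
      (((continuousOn_rpow_mul_log hs').mono Icc_subset_Ici_self).div_const _)
  · intro x hx
    have hpow := hasDerivAt_rpow_const (p := s + 1) (.inl hx.1.ne')
    have h := (hpow.div_const ((s + 1) ^ 2)).sub
      ((hpow.mul (hasDerivAt_log hx.1.ne')).div_const (s + 1))
    refine h.congr_deriv ?_
    rw [add_sub_cancel_right, rpow_add_one hx.1.ne']
    have := hx.1.ne'
    field_simp
    ring
  · intro x hx
    exact mul_nonneg (neg_nonneg.2 (log_nonpos hx.1.le hx.2.le)) (rpow_nonneg hx.1.le s)

theorem setLIntegral_Ioo_zero_one_neg_log_div_one_sub_pow {m : ℕ} (hm : m ≠ 0) :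
    ∫⁻ x in Ioo (0 : ℝ) 1, ENNReal.ofReal (-log x / (1 - x ^ m)) =
      ∑' n : ℕ, ENNReal.ofReal (1 / (m * n + 1 : ℝ) ^ 2) := by
  have hexpand : ∀ x ∈ Ioo (0 : ℝ) 1, ENNReal.ofReal (-log x / (1 - x ^ m)) =
      ∑' n : ℕ, ENNReal.ofReal (-log x * x ^ (m * n : ℝ)) := by
    intro x hx
    have hlog : 0 ≤ -log x := neg_nonneg.2 (log_nonpos hx.1.le hx.2.le)
    have hgeom : HasSum (fun n : ℕ => -log x * x ^ (m * n : ℝ)) (-log x / (1 - x ^ m)) := by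
      simpa only [rpow_mul hx.1.le, rpow_natCast, div_eq_mul_inv] using
        (hasSum_geometric_of_lt_one (pow_nonneg hx.1.le m)
          (pow_lt_one₀ hx.1.le hx.2 hm)).mul_left (-log x)
    rw [← hgeom.tsum_eq, ENNReal.ofReal_tsum_of_nonneg
      (fun n => mul_nonneg hlog (rpow_nonneg hx.1.le _)) hgeom.summable]
  rw [setLIntegral_congr_fun measurableSet_Ioo hexpand, lintegral_tsum fun n => by fun_prop]
  refine tsum_congr fun n => setLIntegral_Ioo_zero_one_neg_log_mul_rpow ?_
  exact neg_one_lt_zero.trans_le (by positivity)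

end LIntegral

theorem hasSum_one_div_odd_pow {k : ℕ} {a : ℝ} (h : HasSum (fun n : ℕ => 1 / (n : ℝ) ^ k) a) :
    HasSum (fun n : ℕ => 1 / (2 * n + 1 : ℝ) ^ k) ((1 - 1 / 2 ^ k) * a) := by
  have heven : HasSum (fun n : ℕ => 1 / ((2 * n : ℕ) : ℝ) ^ k) (1 / 2 ^ k * a) := by
    simpa only [Nat.cast_mul, Nat.cast_ofNat, mul_pow, ← one_div_mul_one_div] using
      h.mul_left (1 / 2 ^ k)
  have hodd : Summable fun n : ℕ => 1 / ((2 * n + 1 : ℕ) : ℝ) ^ k :=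
    h.summable.comp_injective (i := fun n : ℕ => 2 * n + 1) fun _ _ hab => by simpa using hab
  have htotal := (heven.even_add_odd (f := fun n : ℕ => 1 / (n : ℝ) ^ k) hodd.hasSum).unique h
  have hvalue : ∑' n : ℕ, 1 / ((2 * n + 1 : ℕ) : ℝ) ^ k = (1 - 1 / 2 ^ k) * a := by linarith
  rw [← hvalue]
  simpa only [Nat.cast_add, Nat.cast_mul, Nat.cast_ofNat, Nat.cast_one] using hodd.hasSum

theorem setLIntegral_Ioo_zero_one_neg_log_div_one_sub_sq :
    ∫⁻ x in Set.Ioo (0 : ℝ) 1, ENNReal.ofReal (-log x / (1 - x ^ 2)) =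
      ENNReal.ofReal (π ^ 2 / 8) := by
  have hodd := hasSum_one_div_odd_pow hasSum_zeta_two
  rw [setLIntegral_Ioo_zero_one_neg_log_div_one_sub_pow two_ne_zero, Nat.cast_ofNat,
    ← ENNReal.ofReal_tsum_of_nonneg (fun n => by positivity) hodd.summable, hodd.tsum_eq]
  ring_nf

/-- The open medial triangle of the triangle with vertices `(0, 0)`, `(2, 0)`, `(0, 2)`, over which
the integral is taken. It is encoded as the region between two graphs over `(0, 1)` so that its
vertical sections are intervals. -/
def medialTriangle : Set (ℝ × ℝ) :=
  regionBetween (fun x => 1 - x) (fun _ => 1) (Set.Ioo 0 1)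

theorem medialTriangle_eq :
    medialTriangle = {q : ℝ × ℝ | 0 < q.1 ∧ q.1 < 1 ∧ 1 - q.1 < q.2 ∧ q.2 < 1} := by
  ext q
  simp only [medialTriangle, regionBetween, Set.mem_ofPred_eq, Set.mem_Ioo, and_assoc]

theorem measurableSet_medialTriangle : MeasurableSet medialTriangle :=
  measurableSet_regionBetween (by fun_prop) (by fun_prop) measurableSet_Ioo

theorem one_div_mul_mul_nonneg_of_mem_medialTriangle {q : ℝ × ℝ} (hq : q ∈ medialTriangle) :
    0 ≤ 1 / (q.1 * q.2 * (2 - q.1 - q.2)) := by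
  obtain ⟨⟨hx₀, hx₁⟩, hxy, hy₁⟩ := hq
  have hy₀ : 0 < q.2 := by linarith
  have hz₀ : 0 < 2 - q.1 - q.2 := by linarith
  positivity

theorem setLIntegral_medialTriangle_section {x : ℝ} (hx₀ : 0 < x) (hx₁ : x < 1) :
    ∫⁻ y in Set.Ioo (1 - x) 1, ENNReal.ofReal (1 / (x * y * (2 - x - y))) =
      ENNReal.ofReal 2 * ENNReal.ofReal (-log (1 - x) / (1 - (1 - x) ^ 2)) := by
  have hfactor (y : ℝ) : ENNReal.ofReal (1 / (x * y * (2 - x - y))) =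
      ENNReal.ofReal (1 / x) * ENNReal.ofReal (1 / (y * (2 - x - y))) := by
    rw [← ENNReal.ofReal_mul (by positivity), one_div_mul_one_div, mul_assoc]
  simp only [hfactor]
  rw [lintegral_const_mul _ (by fun_prop),
    setLIntegral_Ioo_one_div_mul_sub (by linarith) (by linarith) (by linarith),
    ← ENNReal.ofReal_mul (by positivity), ← ENNReal.ofReal_mul zero_le_two]
  congr 1
  have hx₂ : 2 - x ≠ 0 := by linarith
  rw [show 2 - x - 1 = 1 - x by ring, show 2 - x - (1 - x) = 1 by ring,
    show 1 - (1 - x) ^ 2 = x * (2 - x) by ring, one_div (1 - x), log_inv, div_one]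
  field_simp
  ring

theorem setLIntegral_medialTriangle :
    ∫⁻ q in medialTriangle,
      ENNReal.ofReal (1 / (q.1 * q.2 * (2 - q.1 - q.2))) = ENNReal.ofReal (π ^ 2 / 4) :=
  calc
    _ = ∫⁻ x in Set.Ioo (0 : ℝ) 1, ∫⁻ y in Set.Ioo (1 - x) 1,
          ENNReal.ofReal (1 / (x * y * (2 - x - y))) :=
      setLIntegral_regionBetween (by fun_prop) (by fun_prop) measurableSet_Ioo (by fun_prop)
    _ = ∫⁻ x in Set.Ioo (0 : ℝ) 1,
          ENNReal.ofReal 2 * ENNReal.ofReal (-log (1 - x) / (1 - (1 - x) ^ 2)) :=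
      setLIntegral_congr_fun measurableSet_Ioo fun _ hx =>
        setLIntegral_medialTriangle_section hx.1 hx.2
    _ = ENNReal.ofReal 2 *
          ∫⁻ u in Set.Ioo (0 : ℝ) 1, ENNReal.ofReal (-log u / (1 - u ^ 2)) := by
      rw [lintegral_const_mul _ (by fun_prop), setLIntegral_Ioo_comp_sub_left
        (fun u => ENNReal.ofReal (-log u / (1 - u ^ 2))), sub_self, sub_zero]
    _ = ENNReal.ofReal (π ^ 2 / 4) := by
      rw [setLIntegral_Ioo_zero_one_neg_log_div_one_sub_sq, ← ENNReal.ofReal_mul zero_le_two]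
      ring_nf

theorem stmt3 :
    (∫ q in {q : ℝ × ℝ | 0 < q.1 ∧ q.1 < 1 ∧ 1 - q.1 < q.2 ∧ q.2 < 1},
      1 / (q.1 * q.2 * (2 - q.1 - q.2))) = π ^ 2 / 4 := by
  rw [← medialTriangle_eq, integral_eq_lintegral_of_nonneg_ae
      (ae_restrict_of_forall_mem measurableSet_medialTriangle
        fun _ => one_div_mul_mul_nonneg_of_mem_medialTriangle)
      (Measurable.aestronglyMeasurable (by fun_prop)),
    setLIntegral_medialTriangle, ENNReal.toReal_ofReal (by positivity)]
end

section
/- Let Q₀ = (−1,1) × (−1,1) ⊂ ℝ² be the open standard square and let p = (x,y) ∈ Q₀. Then the Hilbert unit ball B_p = {ξ ∈ ℝ² : gauge(Q₀ − p)(ξ) + gauge(p − Q₀)(ξ) ≤ 2} equals the convex hull of the eight points ±η₁, ±η₂, ±η₃, ±η₄, where η₁ = (1 + min(x,y))·(1−x, 1−y), η₂ = (1 − max(x,−y))·(−(1+x), 1−y), η₃ = (1 − max(x,y))·(−(1+x), −(1+y)), and η₄ = (1 − max(y,−x))·(1−x, −(1+y)). -/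
/-!
Let `F` be the gauge of `Q - p`, where `Q` is the square. Taking `τ = F ξ - 1`, a vector `ξ` lies in
the Hilbert ball iff `F ξ ≤ 1 + τ` and `F (-ξ) ≤ 1 - τ` for some `τ ∈ [-1, 1]`, so the ball is the
union over `τ` of the rectangles `(1 + τ) • (Q - p) ∩ (1 - τ) • (p - Q)`, with `Q` closed. As `τ`
runs from `-1` to `1`, each corner of the rectangle follows a closed polygonal path through `0`
whose only other breakpoints occur when `τ` is, up to sign, a coordinate of `p`. These two
breakpoints per corner are the eight points `±ηᵢ`, and every rectangle is the convex hull of its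
corners.
-/

open Pointwise

/-- The open standard square `(-1,1) × (-1,1)`. -/
def stdSquare : Set (ℝ × ℝ) := Set.Ioo (-1 : ℝ) 1 ×ˢ Set.Ioo (-1 : ℝ) 1

open scoped Topology

lemma Icc_prod_Icc_subset_of_convex {𝕜 : Type*} [Field 𝕜] [LinearOrder 𝕜] [IsStrictOrderedRing 𝕜]
    {K : Set (𝕜 × 𝕜)} (hK : Convex 𝕜 K) {a b c d : 𝕜} (hac : (a, c) ∈ K) (had : (a, d) ∈ K)
    (hbc : (b, c) ∈ K) (hbd : (b, d) ∈ K) : Set.Icc a b ×ˢ Set.Icc c d ⊆ K := by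
  have hcorners : ({a, b} ×ˢ {c, d} : Set (𝕜 × 𝕜)) ⊆ K := by
    rintro ⟨u, v⟩ ⟨rfl | rfl, rfl | rfl⟩ <;> assumption
  calc Set.Icc a b ×ˢ Set.Icc c d ⊆ segment 𝕜 a b ×ˢ segment 𝕜 c d :=
        Set.prod_mono Icc_subset_segment Icc_subset_segment
    _ = convexHull 𝕜 ({a, b} ×ˢ {c, d}) := by rw [convexHull_prod, convexHull_pair, convexHull_pair]
    _ ⊆ K := convexHull_min hcorners hK

lemma convexOn_gauge {E : Type*} [AddCommGroup E] [Module ℝ E] {s : Set E} (hs : Convex ℝ s)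
    (habs : Absorbent ℝ s) : ConvexOn ℝ Set.univ (gauge s) := by
  refine ⟨convex_univ, fun u _ v _ a b ha hb _ ↦ ?_⟩
  rw [← gauge_smul_of_nonneg ha, ← gauge_smul_of_nonneg hb]
  exact gauge_add_le hs habs _ _

lemma gauge_Ioo_prod_Ioo {a b c d : ℝ} (ha : 0 < a) (hb : 0 < b) (hc : 0 < c) (hd : 0 < d)
    (u v : ℝ) : gauge (Set.Ioo (-a) b ×ˢ Set.Ioo (-c) d) (u, v) =
      max (max (-u / a) (u / b)) (max (-v / c) (v / d)) := by
  set M := max (max (-u / a) (u / b)) (max (-v / c) (v / d)) with hM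
  have hmem (r : ℝ) (hr : 0 < r) : (u, v) ∈ r • (Set.Ioo (-a) b ×ˢ Set.Ioo (-c) d) ↔ M < r := by
    simp only [hM, Set.smul_set_prod, LinearOrderedField.smul_Ioo hr, Set.mem_prod, Set.mem_Ioo,
      max_lt_iff, div_lt_iff₀, ha, hb, hc, hd, mul_neg, neg_lt]
  have hnonneg : 0 ≤ M := by
    rcases le_total 0 u with hu | hu
    · exact le_max_of_le_left (le_max_of_le_right (by positivity))
    · exact le_max_of_le_left (le_max_of_le_left (div_nonneg (neg_nonneg.2 hu) ha.le))
  rw [gauge_def, ← csInf_Ioi (a := M)]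
  congr 1
  ext r
  exact ⟨fun ⟨hr, h⟩ ↦ (hmem r hr).1 h,
    fun h ↦ ⟨hnonneg.trans_lt h, (hmem r (hnonneg.trans_lt h)).2 h⟩⟩

section HilbertUnitBall

variable {Ω : Set (ℝ × ℝ)} {p ξ : ℝ × ℝ}

lemma mem_hilbertUnitBall :
    ξ ∈ hilbertUnitBall Ω p ↔ gauge (Ω - {p}) ξ + gauge (Ω - {p}) (-ξ) ≤ 2 := by
  rw [hilbertUnitBall, Set.mem_ofPred_eq, ← neg_sub Ω, gauge_neg_set_eq_gauge_neg]

lemma neg_mem_hilbertUnitBall : -ξ ∈ hilbertUnitBall Ω p ↔ ξ ∈ hilbertUnitBall Ω p := by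
  rw [mem_hilbertUnitBall, mem_hilbertUnitBall, neg_neg, add_comm]

lemma mem_hilbertUnitBall_iff_exists :
    ξ ∈ hilbertUnitBall Ω p ↔ ∃ τ ∈ Set.Icc (-1 : ℝ) 1,
      gauge (Ω - {p}) ξ ≤ 1 + τ ∧ gauge (Ω - {p}) (-ξ) ≤ 1 - τ := by
  rw [mem_hilbertUnitBall]
  constructor
  · intro h
    have h₀ := gauge_nonneg (s := Ω - {p}) ξ
    have h₁ := gauge_nonneg (s := Ω - {p}) (-ξ)
    exact ⟨gauge (Ω - {p}) ξ - 1, ⟨by linarith, by linarith⟩, by linarith, by linarith⟩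
  · rintro ⟨τ, -, h, h'⟩
    linarith

lemma convex_hilbertUnitBall (hΩ : Convex ℝ Ω) (hp : Ω ∈ 𝓝 p) :
    Convex ℝ (hilbertUnitBall Ω p) := by
  have hnhds : Ω - {p} ∈ 𝓝 0 := by
    rw [Set.sub_singleton, ← sub_self p]
    exact (Homeomorph.subRight p).isOpenMap.image_mem_nhds hp
  have hconv : ConvexOn ℝ Set.univ (gauge (Ω - {p})) :=
    convexOn_gauge (hΩ.sub (convex_singleton p)) (absorbent_nhds_zero hnhds)
  have hball := (hconv.add (hconv.comp_linearMap (-LinearMap.id))).convex_le 2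
  convert! hball using 1
  ext ξ
  simp [mem_hilbertUnitBall]

end HilbertUnitBall

lemma neg_fst_mem_stdSquare {x y : ℝ} (hp : (x, y) ∈ stdSquare) : (-x, y) ∈ stdSquare :=
  ⟨⟨neg_lt_neg hp.1.2, neg_lt.1 hp.1.1⟩, hp.2⟩

lemma stdSquare_sub_singleton (x y : ℝ) :
    stdSquare - {(x, y)} = Set.Ioo (-(1 + x)) (1 - x) ×ˢ Set.Ioo (-(1 + y)) (1 - y) := by
  rw [stdSquare, ← Set.singleton_prod_singleton, Set.prod_sub_prod_comm, Set.sub_singleton,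
    Set.sub_singleton, Set.image_sub_const_Ioo, Set.image_sub_const_Ioo, neg_add', neg_add']

lemma gauge_stdSquare_sub_le_iff {x y : ℝ} (hp : (x, y) ∈ stdSquare) {u v r : ℝ} :
    gauge (stdSquare - {(x, y)}) (u, v) ≤ r ↔
      (-u ≤ r * (1 + x) ∧ u ≤ r * (1 - x)) ∧ -v ≤ r * (1 + y) ∧ v ≤ r * (1 - y) := by
  obtain ⟨⟨hx, hx'⟩, hy, hy'⟩ := hp
  dsimp only at hx hx' hy hy'
  have hx₁ : 0 < 1 + x := by linarith
  have hx₂ : 0 < 1 - x := by linarith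
  have hy₁ : 0 < 1 + y := by linarith
  have hy₂ : 0 < 1 - y := by linarith
  rw [stdSquare_sub_singleton, gauge_Ioo_prod_Ioo hx₁ hx₂ hy₁ hy₂]
  simp only [max_le_iff, div_le_iff₀, hx₁, hx₂, hy₁, hy₂]

/-- The tent function over `[-1, 1]`: piecewise affine in `τ`, zero at `τ = ±1`, with its peak at
`τ = a`. For `|τ| ≤ 1`, it is the largest `u` lying in both `(1 + τ) • ([-1, 1] - a)` and
`(1 - τ) • (a - [-1, 1])`. -/
def tent (a τ : ℝ) : ℝ := min ((1 + τ) * (1 - a)) ((1 - τ) * (1 + a))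

section Tent

variable {a τ : ℝ}

lemma tent_of_le (h : τ ≤ a) : tent a τ = (1 + τ) * (1 - a) :=
  min_eq_left (by linarith)

lemma tent_of_ge (h : a ≤ τ) : tent a τ = (1 - τ) * (1 + a) :=
  min_eq_right (by linarith)

lemma tent_neg_neg (a τ : ℝ) : tent (-a) (-τ) = tent a τ := by
  simp only [tent, sub_neg_eq_add, ← sub_eq_add_neg, min_comm]

lemma tent_nonneg (ha : a ∈ Set.Icc (-1) 1) (hτ : τ ∈ Set.Icc (-1) 1) : 0 ≤ tent a τ :=
  le_min (mul_nonneg (by linarith [hτ.1]) (by linarith [ha.2]))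
    (mul_nonneg (by linarith [hτ.2]) (by linarith [ha.1]))

lemma tent_combo {τ₁ τ₂ p q : ℝ} (hτ : τ ∈ Set.Icc τ₁ τ₂) (ha : a ≤ τ₁ ∨ τ₂ ≤ a)
    (hpq : p + q = 1) (h : p * τ₁ + q * τ₂ = τ) : p * tent a τ₁ + q * tent a τ₂ = tent a τ := by
  have hτ₁₂ := hτ.1.trans hτ.2
  obtain rfl : p = 1 - q := by linarith
  rcases ha with ha | ha
  · rw [tent_of_ge ha, tent_of_ge (ha.trans hτ.1), tent_of_ge (ha.trans hτ₁₂), ← h]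
    ring
  · rw [tent_of_le ha, tent_of_le (hτ.2.trans ha), tent_of_le (hτ₁₂.trans ha), ← h]
    ring

end Tent

lemma mem_hilbertUnitBall_stdSquare {x y : ℝ} (hp : (x, y) ∈ stdSquare) {u v : ℝ} :
    (u, v) ∈ hilbertUnitBall stdSquare (x, y) ↔ ∃ τ ∈ Set.Icc (-1 : ℝ) 1,
      u ∈ Set.Icc (-tent (-x) τ) (tent x τ) ∧ v ∈ Set.Icc (-tent (-y) τ) (tent y τ) := by
  simp only [mem_hilbertUnitBall_iff_exists, Prod.neg_mk, gauge_stdSquare_sub_le_iff hp, neg_neg,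
    tent, Set.mem_Icc, neg_le, le_min_iff, sub_neg_eq_add, ← sub_eq_add_neg]
  refine exists_congr fun τ ↦ and_congr_right fun _ ↦ ?_
  tauto

/-- The reflection of the plane in the second coordinate axis, used to transfer statements about
upper right corners of rectangles to upper left ones. -/
def reflectFst : ℝ × ℝ →ₗ[ℝ] ℝ × ℝ := (-LinearMap.id).prodMap LinearMap.id

lemma reflectFst_mk (u v : ℝ) : reflectFst (u, v) = (-u, v) := rfl

lemma reflectFst_mem_hilbertUnitBall {x y : ℝ} (hp : (x, y) ∈ stdSquare) {ξ : ℝ × ℝ}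
    (hξ : ξ ∈ hilbertUnitBall stdSquare (-x, y)) :
    reflectFst ξ ∈ hilbertUnitBall stdSquare (x, y) := by
  obtain ⟨u, v⟩ := ξ
  rw [mem_hilbertUnitBall_stdSquare (neg_fst_mem_stdSquare hp), neg_neg] at hξ
  obtain ⟨τ, hτ, hu, hv⟩ := hξ
  exact (mem_hilbertUnitBall_stdSquare hp).2
    ⟨τ, hτ, ⟨neg_le_neg hu.2, neg_le.1 hu.1⟩, hv⟩

/-- The upper right corner of the rectangle `(1 + τ) • (Q - p) ∩ (1 - τ) • (p - Q)`, where `Q` is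
the closed square and `p = (x, y)`, as a function of `τ ∈ [-1, 1]`. -/
def cornerPath (x y τ : ℝ) : ℝ × ℝ := (tent x τ, tent y τ)

section CornerPath

variable {x y τ : ℝ}

lemma cornerPath_mem_segment {τ₁ τ₂ : ℝ} (hτ : τ ∈ Set.Icc τ₁ τ₂) (hx : x ≤ τ₁ ∨ τ₂ ≤ x)
    (hy : y ≤ τ₁ ∨ τ₂ ≤ y) :
    cornerPath x y τ ∈ segment ℝ (cornerPath x y τ₁) (cornerPath x y τ₂) := by
  obtain ⟨p, q, hp, hq, hpq, h⟩ := segment_eq_Icc (hτ.1.trans hτ.2) ▸ hτ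
  exact ⟨p, q, hp, hq, hpq, Prod.ext (tent_combo hτ hx hpq h) (tent_combo hτ hy hpq h)⟩

lemma cornerPath_mem_of_convex {K : Set (ℝ × ℝ)} (hK : Convex ℝ K) (h₀ : 0 ∈ K)
    (hx : x ∈ Set.Icc (-1) 1) (hy : y ∈ Set.Icc (-1) 1) (hτ : τ ∈ Set.Icc (-1) 1)
    (hmin : cornerPath x y (min x y) ∈ K) (hmax : cornerPath x y (max x y) ∈ K) :
    cornerPath x y τ ∈ K := by
  have hstart : cornerPath x y (-1) = 0 := by
    simp [cornerPath, tent_of_le hx.1, tent_of_le hy.1]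
  have hend : cornerPath x y 1 = 0 := by
    simp [cornerPath, tent_of_ge hx.2, tent_of_ge hy.2]
  rcases le_total τ (min x y) with h₁ | h₁
  · exact hK.segment_subset (hstart ▸ h₀) hmin
      (cornerPath_mem_segment ⟨hτ.1, h₁⟩ (.inr (min_le_left x y)) (.inr (min_le_right x y)))
  rcases le_total τ (max x y) with h₂ | h₂
  · refine hK.segment_subset hmin hmax (cornerPath_mem_segment ⟨h₁, h₂⟩ ?_ ?_) <;>
      rcases le_total x y with h | h <;> simp [h]
  · exact hK.segment_subset hmax (hend ▸ h₀)
      (cornerPath_mem_segment ⟨h₂, hτ.2⟩ (.inl (le_max_left x y)) (.inl (le_max_right x y)))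

lemma cornerPath_mem_hilbertUnitBall (hp : (x, y) ∈ stdSquare) (hτ : τ ∈ Set.Icc (-1) 1) :
    cornerPath x y τ ∈ hilbertUnitBall stdSquare (x, y) := by
  obtain ⟨⟨hx, hx'⟩, hy, hy'⟩ := hp
  have hle {a : ℝ} (ha : -1 < a) (ha' : a < 1) : -tent (-a) τ ≤ tent a τ :=
    (neg_nonpos.2 (tent_nonneg ⟨by linarith, by linarith⟩ hτ)).trans
      (tent_nonneg ⟨ha.le, ha'.le⟩ hτ)
  exact (mem_hilbertUnitBall_stdSquare ⟨⟨hx, hx'⟩, hy, hy'⟩).2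
    ⟨τ, hτ, ⟨hle hx hx', le_rfl⟩, hle hy hy', le_rfl⟩

end CornerPath

/-- The breakpoints of the paths of the upper right and upper left corners, which are the
points `η₁`, `-η₃`, `η₂`, `-η₄` in this order. They represent the antipodal pairs of vertices of the
Hilbert unit ball of the square at `(x, y)`. -/
def upperVertices (x y : ℝ) : Set (ℝ × ℝ) :=
  {cornerPath x y (min x y), cornerPath x y (max x y),
    reflectFst (cornerPath (-x) y (min (-x) y)), reflectFst (cornerPath (-x) y (max (-x) y))}

section UpperVertices

variable {x y : ℝ}

lemma upperVertices_subset_hilbertUnitBall (hp : (x, y) ∈ stdSquare) :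
    upperVertices x y ⊆ hilbertUnitBall stdSquare (x, y) := by
  have hbreak {a b : ℝ} (h : (a, b) ∈ stdSquare) :
      min a b ∈ Set.Icc (-1) 1 ∧ max a b ∈ Set.Icc (-1) 1 := by
    obtain ⟨⟨ha, ha'⟩, hb, hb'⟩ := h
    exact ⟨⟨le_min ha.le hb.le, min_le_of_left_le ha'.le⟩,
      ⟨le_max_of_le_left ha.le, max_le ha'.le hb'.le⟩⟩
  have hp' := neg_fst_mem_stdSquare hp
  rintro ξ (rfl | rfl | rfl | rfl)
  · exact cornerPath_mem_hilbertUnitBall hp (hbreak hp).1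
  · exact cornerPath_mem_hilbertUnitBall hp (hbreak hp).2
  · exact reflectFst_mem_hilbertUnitBall hp (cornerPath_mem_hilbertUnitBall hp' (hbreak hp').1)
  · exact reflectFst_mem_hilbertUnitBall hp (cornerPath_mem_hilbertUnitBall hp' (hbreak hp').2)

lemma hilbertUnitBall_stdSquare_subset_of_convex (hp : (x, y) ∈ stdSquare) {K : Set (ℝ × ℝ)}
    (hK : Convex ℝ K) (hneg : ∀ ξ ∈ K, -ξ ∈ K) (hverts : upperVertices x y ⊆ K) :
    hilbertUnitBall stdSquare (x, y) ⊆ K := by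
  simp only [upperVertices, Set.insert_subset_iff, Set.singleton_subset_iff] at hverts
  obtain ⟨hmin, hmax, hmin', hmax'⟩ := hverts
  have h₀ : 0 ∈ K := midpoint_self_neg ℝ (cornerPath x y (min x y)) ▸
    hK.midpoint_mem hmin (hneg _ hmin)
  have hx : x ∈ Set.Icc (-1) 1 := Set.Ioo_subset_Icc_self hp.1
  have hx' : -x ∈ Set.Icc (-1) 1 := Set.Ioo_subset_Icc_self (neg_fst_mem_stdSquare hp).1
  have hy : y ∈ Set.Icc (-1) 1 := Set.Ioo_subset_Icc_self hp.2
  have hright {τ : ℝ} (hτ : τ ∈ Set.Icc (-1) 1) : cornerPath x y τ ∈ K :=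
    cornerPath_mem_of_convex hK h₀ hx hy hτ hmin hmax
  have hleft {τ : ℝ} (hτ : τ ∈ Set.Icc (-1) 1) : reflectFst (cornerPath (-x) y τ) ∈ K :=
    cornerPath_mem_of_convex (hK.linear_preimage reflectFst) (by simpa using h₀) hx' hy hτ hmin'
      hmax'
  rintro ⟨u, v⟩ hξ
  obtain ⟨τ, hτ, hu, hv⟩ := (mem_hilbertUnitBall_stdSquare hp).1 hξ
  have hτ' : -τ ∈ Set.Icc (-1) 1 := ⟨neg_le_neg hτ.2, neg_le.1 hτ.1⟩
  have hbottomLeft : (-tent (-x) τ, -tent (-y) τ) ∈ K := by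
    simpa [cornerPath, ← tent_neg_neg _ (-τ)] using hneg _ (hright hτ')
  have hbottomRight : (tent x τ, -tent (-y) τ) ∈ K := by
    simpa [cornerPath, reflectFst_mk, ← tent_neg_neg _ (-τ)] using hneg _ (hleft hτ')
  exact Icc_prod_Icc_subset_of_convex hK hbottomLeft (hleft hτ) hbottomRight (hright hτ) ⟨hu, hv⟩

theorem hilbertUnitBall_stdSquare_eq_convexHull (hp : (x, y) ∈ stdSquare) :
    hilbertUnitBall stdSquare (x, y) = convexHull ℝ (upperVertices x y ∪ -upperVertices x y) := by
  apply Set.Subset.antisymm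
  · refine hilbertUnitBall_stdSquare_subset_of_convex hp (convex_convexHull ℝ _) (fun ξ hξ ↦ ?_)
      (Set.subset_union_left.trans (subset_convexHull ℝ _))
    rwa [← Set.mem_neg, ← convexHull_neg, Set.union_neg, neg_neg, Set.union_comm]
  · have hnhds : stdSquare ∈ 𝓝 (x, y) := (isOpen_Ioo.prod isOpen_Ioo).mem_nhds hp
    have hconv : Convex ℝ stdSquare := (convex_Ioo (-1) 1).prod (convex_Ioo (-1) 1)
    have hverts := upperVertices_subset_hilbertUnitBall hp
    exact convexHull_min (Set.union_subset hverts fun ξ hξ ↦ neg_mem_hilbertUnitBall.1 (hverts hξ))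
      (convex_hilbertUnitBall hconv hnhds)

end UpperVertices

lemma cornerPath_min (x y : ℝ) :
    cornerPath x y (min x y) = (1 + min x y) • ((1 - x, 1 - y) : ℝ × ℝ) := by
  rw [cornerPath, tent_of_le (min_le_left x y), tent_of_le (min_le_right x y), Prod.smul_mk,
    smul_eq_mul, smul_eq_mul]

lemma cornerPath_max (x y : ℝ) :
    cornerPath x y (max x y) = (1 - max x y) • ((1 + x, 1 + y) : ℝ × ℝ) := by
  rw [cornerPath, tent_of_ge (le_max_left x y), tent_of_ge (le_max_right x y), Prod.smul_mk,
    smul_eq_mul, smul_eq_mul]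

lemma reflectFst_cornerPath_min (x y : ℝ) :
    reflectFst (cornerPath (-x) y (min (-x) y)) =
      (1 - max x (-y)) • ((-(1 + x), 1 - y) : ℝ × ℝ) := by
  have hmin : 1 + min (-x) y = 1 - max x (-y) := by
    rw [← neg_neg y, min_neg_neg, neg_neg, ← sub_eq_add_neg]
  rw [cornerPath_min, map_smul, reflectFst_mk, hmin, sub_neg_eq_add]

lemma reflectFst_cornerPath_max (x y : ℝ) :
    reflectFst (cornerPath (-x) y (max (-x) y)) =
      -((1 - max y (-x)) • ((1 - x, -(1 + y)) : ℝ × ℝ)) := by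
  rw [cornerPath_max, map_smul, reflectFst_mk, ← smul_neg, Prod.neg_mk, neg_neg, max_comm,
    ← sub_eq_add_neg]

theorem stmt4 (x y : ℝ) (hp : (x, y) ∈ stdSquare) :
    hilbertUnitBall stdSquare (x, y) =
      convexHull ℝ
        ({(1 + min x y) • ((1 - x, 1 - y) : ℝ × ℝ),
          (1 - max x (-y)) • ((-(1 + x), 1 - y) : ℝ × ℝ),
          (1 - max x y) • ((-(1 + x), -(1 + y)) : ℝ × ℝ),
          (1 - max y (-x)) • ((1 - x, -(1 + y)) : ℝ × ℝ),
          -((1 + min x y) • ((1 - x, 1 - y) : ℝ × ℝ)),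
          -((1 - max x (-y)) • ((-(1 + x), 1 - y) : ℝ × ℝ)),
          -((1 - max x y) • ((-(1 + x), -(1 + y)) : ℝ × ℝ)),
          -((1 - max y (-x)) • ((1 - x, -(1 + y)) : ℝ × ℝ))} : Set (ℝ × ℝ)) := by
  have hη₃ : cornerPath x y (max x y) =
      -((1 - max x y) • ((-(1 + x), -(1 + y)) : ℝ × ℝ)) := by
    rw [cornerPath_max, ← smul_neg, Prod.neg_mk, neg_neg, neg_neg]
  rw [hilbertUnitBall_stdSquare_eq_convexHull hp, upperVertices, cornerPath_min, hη₃,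
    reflectFst_cornerPath_min, reflectFst_cornerPath_max]
  congr 1
  ext ξ
  simp only [Set.mem_union, Set.mem_neg, Set.mem_insert_iff, Set.mem_singleton_iff,
    neg_eq_iff_eq_neg, neg_neg]
  tauto
end

section
/- Let Z ⊂ ℝ² be a finite set with k elements whose convex hull P = convexHull(Z) has nonempty interior, and let p be an interior point of P. Then the Hilbert unit ball B_p = {ξ ∈ ℝ² : gauge(P − p)(ξ) + gauge(p − P)(ξ) ≤ 2} is a polygon with at most 2k vertices lying on the lines through the origin and the points z − p for z ∈ Z; that is, there exists a finite set V ⊂ ℝ² with at most 2k elements such that B_p = convexHull(V) and every v ∈ V is a real scalar multiple of z − p for some z ∈ Z. -/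
open Pointwise

/-!
The gauge of a polytope `K` is linear near a point `v` along the span of the vertices of the face
of `K` that the ray through `v` meets. If `v` is an extreme point of the set where the sum of the
gauges of two polytopes is at most `2`, then the spans `S` and `T` belonging to the two polytopes
meet at most in a line: otherwise some `u ≠ 0` in `S ⊓ T` keeps the sum of the gauges constant
near `v`, and `v` is the midpoint of `v - t • u` and `v + t • u`. In the plane this makes one of
`S`, `T` a line, so `v` lies on the ray through a vertex of one of the two polytopes. The Hilbert
unit ball at `p` is the case of the polygons `P - p` and `p - P`.
-/

open Set Filter Module Submodule
open scoped Topology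

section Dimension

variable {𝕜 V : Type*} [Field 𝕜] [AddCommGroup V] [Module 𝕜 V]

theorem finrank_eq_one_or_of_finrank_inf_le_one (hV : finrank 𝕜 V = 2) {S T : Submodule 𝕜 V}
    (hST : finrank 𝕜 ↥(S ⊓ T) ≤ 1) {v : V} (hv : v ≠ 0) (hvS : v ∈ S) (hvT : v ∈ T) :
    finrank 𝕜 S = 1 ∨ finrank 𝕜 T = 1 := by
  have : FiniteDimensional 𝕜 V := .of_finrank_eq_succ hV
  have hS : 1 ≤ finrank 𝕜 S := one_le_finrank_iff.mpr (S.ne_bot_iff.mpr ⟨v, hvS, hv⟩)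
  have hT : 1 ≤ finrank 𝕜 T := one_le_finrank_iff.mpr (T.ne_bot_iff.mpr ⟨v, hvT, hv⟩)
  have hsup : finrank 𝕜 ↥(S ⊔ T) ≤ finrank 𝕜 V := finrank_le _
  have hdim := finrank_sup_add_finrank_inf_eq S T
  lia

theorem exists_eq_smul_of_finrank_span_eq_one {A : Set V} {f : V →ₗ[𝕜] 𝕜}
    (hf : ∀ a ∈ A, f a = 1) (hA : finrank 𝕜 (span 𝕜 A) = 1) {v : V} (hv : v ∈ span 𝕜 A) :
    ∃ a ∈ A, v = f v • a := by
  obtain rfl | ⟨a, ha⟩ := A.eq_empty_or_nonempty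
  · rw [span_empty, finrank_bot] at hA
    exact absurd hA zero_ne_one
  have ha₀ : (⟨a, subset_span ha⟩ : span 𝕜 A) ≠ 0 := by
    intro h
    obtain rfl : a = 0 := congrArg Subtype.val h
    simpa using hf 0 ha
  obtain ⟨c, hc⟩ := (finrank_eq_one_iff_of_nonzero' _ ha₀).mp hA ⟨v, hv⟩
  obtain rfl : c • a = v := congrArg Subtype.val hc
  exact ⟨a, ha, by simp [hf a ha]⟩

end Dimension

section Gauge

variable {E : Type*} [AddCommGroup E] [Module ℝ E] {K : Set E}

theorem convexOn_gauge_s6 (hK : Convex ℝ K) (hK' : Absorbent ℝ K) : ConvexOn ℝ univ (gauge K) := by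
  refine ⟨convex_univ, fun x _ y _ a b ha hb _ ↦ ?_⟩
  simpa only [gauge_smul_of_nonneg ha, gauge_smul_of_nonneg hb] using
    gauge_add_le hK hK' (a • x) (b • y)

theorem gauge_sum_smul_le (hK : Convex ℝ K) (hK' : Absorbent ℝ K) {ι : Type*} {s : Finset ι}
    {z : ι → E} {c : ι → ℝ} (hz : ∀ i ∈ s, z i ∈ K) (hc : ∀ i ∈ s, 0 ≤ c i) :
    gauge K (∑ i ∈ s, c i • z i) ≤ ∑ i ∈ s, c i := by
  refine (gauge_sum_le hK hK' s _).trans (Finset.sum_le_sum fun i hi ↦ ?_)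
  rw [gauge_smul_of_nonneg (hc i hi), smul_eq_mul]
  exact mul_le_of_le_one_right (hc i hi) (gauge_le_one_of_mem (hz i hi))

theorem exists_linearMap_eq_gauge_le_gauge (hK : Convex ℝ K) (hK' : Absorbent ℝ K) (v : E) :
    ∃ f : E →ₗ[ℝ] ℝ, f v = gauge K v ∧ ∀ x, f x ≤ gauge K x := by
  have hker (c : ℝ) (h : c • v = 0) : c • gauge K v = 0 := by
    rcases smul_eq_zero.mp h with rfl | rfl <;> simp
  let g : E →ₗ.[ℝ] ℝ := .mkSpanSingleton' v (gauge K v) hker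
  have hg (x : g.domain) : g x ≤ gauge K x := by
    obtain ⟨x, hx⟩ := x
    obtain ⟨c, rfl⟩ := mem_span_singleton.mp hx
    rw [LinearPMap.mkSpanSingleton'_apply, RingHom.id_apply]
    rcases le_total 0 c with hc | hc
    · exact (gauge_smul_of_nonneg hc v).ge
    · exact (mul_nonpos_of_nonpos_of_nonneg hc (gauge_nonneg v)).trans (gauge_nonneg _)
  obtain ⟨f, hfg, hf⟩ := exists_extension_of_le_sublinear g (gauge K)
    (fun c hc x ↦ gauge_smul_of_nonneg hc.le x) (gauge_add_le hK hK') hg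
  exact ⟨f, (hfg ⟨v, mem_span_singleton_self v⟩).trans
    (LinearPMap.mkSpanSingleton'_apply_self _ _ hker _), hf⟩

/-- The gauge of `K` agrees with the linear functional `f` near the point `v` in each direction of
the subspace `S`. The neighbourhood may depend on the direction, so no topology on the space is
needed. -/
def GaugeLinearAlong (K : Set E) (v : E) (S : Submodule ℝ E) (f : E →ₗ[ℝ] ℝ) : Prop :=
  ∀ u ∈ S, ∀ᶠ t : ℝ in 𝓝 0, gauge K (v + t • u) = f (v + t • u)

theorem GaugeLinearAlong.gauge_eq {v : E} {S : Submodule ℝ E} {f : E →ₗ[ℝ] ℝ}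
    (h : GaugeLinearAlong K v S f) : gauge K v = f v := by
  simpa using (h 0 S.zero_mem).self_of_nhds

theorem gaugeLinearAlong_span_range (hK : Convex ℝ K) (hK' : Absorbent ℝ K) {f : E →ₗ[ℝ] ℝ}
    (hf : ∀ x, f x ≤ gauge K x) {ι : Type*} [Fintype ι] {z : ι → E} {c : ι → ℝ}
    (hz : ∀ i, z i ∈ K) (hfz : ∀ i, f (z i) = 1) (hc : ∀ i, 0 < c i) :
    GaugeLinearAlong K (∑ i, c i • z i) (span ℝ (range z)) f := by
  intro u hu
  obtain ⟨d, rfl⟩ := (mem_span_range_iff_exists_fun ℝ).mp hu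
  have hpos : ∀ᶠ t : ℝ in 𝓝 0, ∀ i, 0 < c i + t * d i := by
    refine eventually_all.mpr fun i ↦ ?_
    have : Tendsto (fun t : ℝ ↦ c i + t * d i) (𝓝 0) (𝓝 (c i)) :=
      Continuous.tendsto' (by fun_prop) _ _ (by simp)
    exact this.eventually_const_lt (hc i)
  filter_upwards [hpos] with t ht
  have hsum : ∑ i, c i • z i + t • ∑ i, d i • z i = ∑ i, (c i + t * d i) • z i := by
    simp only [Finset.smul_sum, smul_smul, add_smul, Finset.sum_add_distrib]
  refine le_antisymm ?_ (hf _)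
  rw [hsum]
  calc gauge K (∑ i, (c i + t * d i) • z i)
      ≤ ∑ i, (c i + t * d i) := gauge_sum_smul_le hK hK' (fun i _ ↦ hz i) fun i _ ↦ (ht i).le
    _ = f (∑ i, (c i + t * d i) • z i) := by simp [hfz]

theorem exists_gaugeLinearAlong_span_of_mem_smul_convexHull {W : Set E}
    (hW : Absorbent ℝ (convexHull ℝ W)) {v : E} (hv : 0 < gauge (convexHull ℝ W) v)
    (hvW : v ∈ gauge (convexHull ℝ W) v • convexHull ℝ W) :
    ∃ A ⊆ W, ∃ f : E →ₗ[ℝ] ℝ, v ∈ span ℝ A ∧ (∀ a ∈ A, f a = 1) ∧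
      GaugeLinearAlong (convexHull ℝ W) v (span ℝ A) f := by
  have hK : Convex ℝ (convexHull ℝ W) := convex_convexHull ℝ W
  obtain ⟨x, hx, hxv⟩ := hvW
  obtain ⟨ι, _, z, c, hzW, -, hc, hc₁, rfl⟩ := eq_pos_convex_span_of_mem_convexHull hx
  obtain ⟨f, hfv, hf⟩ := exists_linearMap_eq_gauge_le_gauge hK hW v
  have hz (i : ι) : z i ∈ convexHull ℝ W := subset_convexHull ℝ W (hzW (mem_range_self i))
  have hfz_le (i : ι) : f (z i) ≤ 1 := (hf _).trans (gauge_le_one_of_mem (hz i))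
  -- `f` is at most `1` at the points `z i`, and its weighted mean over them is `1`.
  have hfx : ∑ i, c i * f (z i) = 1 := by
    refine (mul_eq_left₀ hv.ne').mp ?_
    calc gauge (convexHull ℝ W) v * ∑ i, c i * f (z i)
        = f (gauge (convexHull ℝ W) v • ∑ i, c i • z i) := by
          simp only [map_smul, map_sum, smul_eq_mul]
      _ = gauge (convexHull ℝ W) v := (congrArg f hxv).trans hfv
  have hfz (i : ι) : f (z i) = 1 := by
    have heq := (Finset.sum_eq_sum_iff_of_le fun i _ ↦
      mul_le_of_le_one_right (hc i).le (hfz_le i)).mp (hfx.trans hc₁.symm)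
    exact (mul_eq_left₀ (hc i).ne').mp (heq i (Finset.mem_univ i))
  have hvz : ∑ i, (gauge (convexHull ℝ W) v * c i) • z i = v := by
    simpa only [Finset.smul_sum, smul_smul] using hxv
  refine ⟨range z, hzW, f, ?_, forall_mem_range.mpr hfz, ?_⟩
  · exact (mem_span_range_iff_exists_fun ℝ).mpr ⟨_, hvz⟩
  · have := gaugeLinearAlong_span_range hK hW hf hz hfz fun i ↦ mul_pos hv (hc i)
    rwa [hvz] at this

end Gauge

section ExtremePoints

variable {E : Type*} [AddCommGroup E] [Module ℝ E] {K L : Set E}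

theorem eq_zero_of_mem_extremePoints_of_eventually_add_smul_mem {v u : E}
    (hv : v ∈ K.extremePoints ℝ) (hu : ∀ᶠ t : ℝ in 𝓝 0, v + t • u ∈ K) : u = 0 := by
  have hneg : ∀ᶠ t : ℝ in 𝓝 0, v + -t • u ∈ K :=
    (continuous_neg.tendsto' 0 0 neg_zero).eventually hu
  obtain ⟨t, ⟨htu, htu'⟩, ht : 0 < t⟩ :=
    ((hu.and hneg).filter_mono nhdsWithin_le_nhds |>.and
      (self_mem_nhdsWithin : Ioi (0 : ℝ) ∈ 𝓝[>] 0)).exists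
  have hmid : v ∈ openSegment ℝ (v + t • u) (v + -t • u) :=
    ⟨1 / 2, 1 / 2, by norm_num, by norm_num, by norm_num, by module⟩
  simpa [ht.ne'] using hv.2 htu htu' hmid

/-- The harmonic mean of two convex sets `K` and `L` containing `0` in their interior: the convex
set whose gauge is the arithmetic mean of the gauges of `K` and `L`. The harmonic symmetrization
of `Ω` centered at `p` is the harmonic mean of `Ω - {p}` and `{p} - Ω`. -/
def harmonicMean (K L : Set E) : Set E :=
  {x | gauge K x + gauge L x ≤ 2}

theorem convex_harmonicMean (hK : Convex ℝ K) (hK' : Absorbent ℝ K) (hL : Convex ℝ L)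
    (hL' : Absorbent ℝ L) : Convex ℝ (harmonicMean K L) := by
  simpa [harmonicMean] using ((convexOn_gauge_s6 hK hK').add (convexOn_gauge_s6 hL hL')).convex_le 2

theorem finrank_inf_le_one_of_mem_extremePoints_harmonicMean {v : E} {S T : Submodule ℝ E}
    {f g : E →ₗ[ℝ] ℝ} (hv : v ∈ (harmonicMean K L).extremePoints ℝ)
    (hf : GaugeLinearAlong K v S f) (hg : GaugeLinearAlong L v T g) :
    finrank ℝ ↥(S ⊓ T) ≤ 1 := by
  let h : ↥(S ⊓ T) →ₗ[ℝ] ℝ := (f + g) ∘ₗ (S ⊓ T).subtype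
  suffices hinj : Function.Injective h by
    simpa using LinearMap.finrank_le_finrank_of_injective hinj
  refine (injective_iff_map_eq_zero h).mpr fun ⟨u, hu⟩ hu₀ ↦ Subtype.ext ?_
  have hfgu : f u + g u = 0 := hu₀
  refine eq_zero_of_mem_extremePoints_of_eventually_add_smul_mem hv ?_
  filter_upwards [hf u hu.1, hg u hu.2] with t hft hgt
  calc gauge K (v + t • u) + gauge L (v + t • u)
      = f v + g v + t * (f u + g u) := by
        rw [hft, hgt, map_add, map_add, map_smul, map_smul, smul_eq_mul, smul_eq_mul]; ring
    _ = gauge K v + gauge L v := by rw [hfgu, mul_zero, add_zero, hf.gauge_eq, hg.gauge_eq]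
    _ ≤ 2 := hv.1

end ExtremePoints

section Topology

variable {E : Type*} [AddCommGroup E] [Module ℝ E] [TopologicalSpace E] [ContinuousSMul ℝ E]
  {K L : Set E}

theorem harmonicMean_mem_nhds_zero (hK₀ : K ∈ 𝓝 0) (hL₀ : L ∈ 𝓝 0) :
    harmonicMean K L ∈ 𝓝 0 := by
  have : Tendsto (fun x ↦ gauge K x + gauge L x) (𝓝 0) (𝓝 (0 + 0)) :=
    (tendsto_gauge_nhds_zero hK₀).add (tendsto_gauge_nhds_zero hL₀)
  exact this.eventually_le_const (by norm_num : (0 : ℝ) + 0 < 2)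

variable [IsTopologicalAddGroup E]

theorem isClosed_harmonicMean (hK : Convex ℝ K) (hK₀ : K ∈ 𝓝 0) (hL : Convex ℝ L)
    (hL₀ : L ∈ 𝓝 0) : IsClosed (harmonicMean K L) :=
  isClosed_le ((continuous_gauge hK hK₀).add (continuous_gauge hL hL₀)) continuous_const

theorem gauge_eq_one_of_mem_extremePoints [Nontrivial E] (hK : Convex ℝ K) (hK₀ : K ∈ 𝓝 0)
    {v : E} (hv : v ∈ K.extremePoints ℝ) : gauge K v = 1 :=
  (gauge_eq_one_iff_mem_frontier hK hK₀).mpr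
    ⟨subset_closure hv.1, fun hint ↦
      (disjoint_interior_extremePoints K).notMem_of_mem_left hint hv⟩

theorem gauge_le_one_iff_mem (hK : Convex ℝ K) (hK' : IsClosed K) (hK₀ : K ∈ 𝓝 0) {v : E} :
    gauge K v ≤ 1 ↔ v ∈ K := by
  rw [gauge_le_one_iff_mem_closure hK hK₀, hK'.closure_eq]

theorem mem_smul_of_gauge_le (hK : Convex ℝ K) (hK' : IsClosed K) (hK₀ : K ∈ 𝓝 0) {v : E} {r : ℝ}
    (hr : 0 < r) (hv : gauge K v ≤ r) : v ∈ r • K := by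
  rw [mem_smul_set_iff_inv_smul_mem₀ hr.ne', ← gauge_le_one_iff_mem hK hK' hK₀,
    gauge_smul_of_nonneg (inv_nonneg.mpr hr.le), smul_eq_mul]
  exact inv_mul_le_one_of_le₀ hv hr.le

variable [T2Space E]

theorem gauge_pos_of_isCompact (hK : IsCompact K) (hK₀ : K ∈ 𝓝 0) {v : E} (hv : v ≠ 0) :
    0 < gauge K v :=
  (gauge_pos (absorbent_nhds_zero hK₀) (hK.isVonNBounded ℝ)).mpr hv

theorem isCompact_harmonicMean (hK : Convex ℝ K) (hK' : IsCompact K) (hK₀ : K ∈ 𝓝 0)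
    (hL : Convex ℝ L) (hL₀ : L ∈ 𝓝 0) : IsCompact (harmonicMean K L) := by
  refine (hK'.smul (2 : ℝ)).of_isClosed_subset (isClosed_harmonicMean hK hK₀ hL hL₀) fun x hx ↦ ?_
  have : gauge K x ≤ 2 := (le_add_of_nonneg_right (gauge_nonneg x)).trans hx
  exact mem_smul_of_gauge_le hK hK'.isClosed hK₀ two_pos this

theorem exists_gaugeLinearAlong_span {W : Set E} (hW : IsCompact (convexHull ℝ W))
    (hW₀ : convexHull ℝ W ∈ 𝓝 0) {v : E} (hv : v ≠ 0) :
    ∃ A ⊆ W, ∃ f : E →ₗ[ℝ] ℝ, v ∈ span ℝ A ∧ (∀ a ∈ A, f a = 1) ∧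
      GaugeLinearAlong (convexHull ℝ W) v (span ℝ A) f :=
  have hpos := gauge_pos_of_isCompact hW hW₀ hv
  exists_gaugeLinearAlong_span_of_mem_smul_convexHull (absorbent_nhds_zero hW₀) hpos
    (mem_smul_of_gauge_le (convex_convexHull ℝ W) hW.isClosed hW₀ hpos le_rfl)

theorem eq_convexHull_image_inv_gauge_smul [LocallyConvexSpace ℝ E] [Nontrivial E]
    (hK : Convex ℝ K) (hK' : IsCompact K) (hK₀ : K ∈ 𝓝 0) {W : Set E} (hW : W.Finite)
    (hext : ∀ v ∈ K.extremePoints ℝ, ∃ w ∈ W, ∃ c : ℝ, 0 ≤ c ∧ v = c • w) :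
    K = convexHull ℝ ((fun w ↦ (gauge K w)⁻¹ • w) '' W) := by
  refine Subset.antisymm ?_ (convexHull_min ?_ hK)
  · have hsub : K.extremePoints ℝ ⊆ (fun w ↦ (gauge K w)⁻¹ • w) '' W := by
      intro v hv
      obtain ⟨w, hw, c, hc, rfl⟩ := hext v hv
      have hone : c * gauge K w = 1 := by
        rw [← smul_eq_mul, ← gauge_smul_of_nonneg hc]
        exact gauge_eq_one_of_mem_extremePoints hK hK₀ hv
      exact ⟨w, hw, by rw [eq_inv_of_mul_eq_one_left hone]⟩
    calc K = closure (convexHull ℝ (K.extremePoints ℝ)) :=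
          (closure_convexHull_extremePoints hK' hK).symm
      _ ⊆ convexHull ℝ ((fun w ↦ (gauge K w)⁻¹ • w) '' W) :=
          closure_minimal (convexHull_mono hsub) ((hW.image _).isClosed_convexHull ℝ)
  · rintro _ ⟨w, -, rfl⟩
    rw [← gauge_le_one_iff_mem hK hK'.isClosed hK₀,
      gauge_smul_of_nonneg (inv_nonneg.mpr (gauge_nonneg w)), smul_eq_mul]
    exact inv_mul_le_one

end Topology

section Plane

variable {E : Type*} [AddCommGroup E] [Module ℝ E] [TopologicalSpace E] [IsTopologicalAddGroup E]
  [ContinuousSMul ℝ E] [T2Space E] {W W' : Set E}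

theorem exists_eq_smul_of_mem_extremePoints_harmonicMean (hE : finrank ℝ E = 2)
    (hW : IsCompact (convexHull ℝ W)) (hW₀ : convexHull ℝ W ∈ 𝓝 0)
    (hW' : IsCompact (convexHull ℝ W')) (hW'₀ : convexHull ℝ W' ∈ 𝓝 0) {v : E} (hv : v ≠ 0)
    (hvext : v ∈ (harmonicMean (convexHull ℝ W) (convexHull ℝ W')).extremePoints ℝ) :
    ∃ w ∈ W ∪ W', ∃ c : ℝ, 0 ≤ c ∧ v = c • w := by
  obtain ⟨A, hAW, f, hvA, hfA, hf⟩ := exists_gaugeLinearAlong_span hW hW₀ hv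
  obtain ⟨B, hBW', g, hvB, hgB, hg⟩ := exists_gaugeLinearAlong_span hW' hW'₀ hv
  have hdim := finrank_inf_le_one_of_mem_extremePoints_harmonicMean hvext hf hg
  rcases finrank_eq_one_or_of_finrank_inf_le_one hE hdim hv hvA hvB with hA | hB
  · obtain ⟨a, ha, hva⟩ := exists_eq_smul_of_finrank_span_eq_one hfA hA hvA
    exact ⟨a, .inl (hAW ha), f v, hf.gauge_eq ▸ gauge_nonneg v, hva⟩
  · obtain ⟨b, hb, hvb⟩ := exists_eq_smul_of_finrank_span_eq_one hgB hB hvB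
    exact ⟨b, .inr (hBW' hb), g v, hg.gauge_eq ▸ gauge_nonneg v, hvb⟩

theorem harmonicMean_convexHull_eq [LocallyConvexSpace ℝ E] (hE : finrank ℝ E = 2)
    (hW : W.Finite) (hW₀ : convexHull ℝ W ∈ 𝓝 0) (hW' : W'.Finite)
    (hW'₀ : convexHull ℝ W' ∈ 𝓝 0) :
    harmonicMean (convexHull ℝ W) (convexHull ℝ W') = convexHull ℝ
      ((fun w ↦ (gauge (harmonicMean (convexHull ℝ W) (convexHull ℝ W')) w)⁻¹ • w) ''
        (W ∪ W')) := by
  have : Nontrivial E := nontrivial_of_finrank_pos (R := ℝ) (by lia)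
  have hK := convex_convexHull ℝ W
  have hL := convex_convexHull ℝ W'
  have hcpt := hW.isCompact_convexHull ℝ
  have hconv := convex_harmonicMean hK (absorbent_nhds_zero hW₀) hL (absorbent_nhds_zero hW'₀)
  have hnhds := harmonicMean_mem_nhds_zero hW₀ hW'₀
  refine eq_convexHull_image_inv_gauge_smul hconv (isCompact_harmonicMean hK hcpt hW₀ hL hW'₀)
    hnhds (hW.union hW') fun v hv ↦ ?_
  have hv₀ : v ≠ 0 := by
    rintro rfl
    simpa using gauge_eq_one_of_mem_extremePoints hconv hnhds hv
  exact exists_eq_smul_of_mem_extremePoints_harmonicMean hE hcpt hW₀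
    (hW'.isCompact_convexHull ℝ) hW'₀ hv₀ hv

end Plane

theorem stmt6_general {E : Type*} [AddCommGroup E] [Module ℝ E] [TopologicalSpace E]
    [IsTopologicalAddGroup E] [ContinuousSMul ℝ E] [T2Space E] [LocallyConvexSpace ℝ E]
    (hE : finrank ℝ E = 2) (Z : Finset E) (p : E) (hp : p ∈ interior (convexHull ℝ (Z : Set E))) :
    ∃ V : Finset E, V.card ≤ 2 * Z.card ∧
      harmonicMean (convexHull ℝ (Z : Set E) - {p}) ({p} - convexHull ℝ (Z : Set E)) =
        convexHull ℝ (V : Set E) ∧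
      ∀ v ∈ V, ∃ z ∈ Z, ∃ c : ℝ, v = c • (z - p) := by
  classical
  have hsub : convexHull ℝ ((Z : Set E) - {p}) = convexHull ℝ (Z : Set E) - {p} := by
    rw [convexHull_sub, convexHull_singleton]
  have hsub' : convexHull ℝ ({p} - (Z : Set E)) = {p} - convexHull ℝ (Z : Set E) := by
    rw [convexHull_sub, convexHull_singleton]
  have hZ : convexHull ℝ (Z : Set E) ∈ 𝓝 p := mem_interior_iff_mem_nhds.mp hp
  have hnhds : convexHull ℝ (Z : Set E) - {p} ∈ 𝓝 0 := by
    simpa using! (Homeomorph.subRight p).isOpenMap.image_mem_nhds hZ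
  have hnhds' : {p} - convexHull ℝ (Z : Set E) ∈ 𝓝 0 := by
    simpa using! (Homeomorph.subLeft p).isOpenMap.image_mem_nhds hZ
  have hball := harmonicMean_convexHull_eq hE (Z.finite_toSet.sub (finite_singleton p))
    (hsub ▸ hnhds) ((finite_singleton p).sub Z.finite_toSet) (hsub' ▸ hnhds')
  rw [hsub, hsub'] at hball
  let r (w : E) : ℝ :=
    (gauge (harmonicMean (convexHull ℝ (Z : Set E) - {p}) ({p} - convexHull ℝ (Z : Set E))) w)⁻¹
  refine ⟨((Z - {p}) ∪ ({p} - Z)).image fun w ↦ r w • w, ?_, ?_, ?_⟩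
  · calc _ ≤ (Z - {p} ∪ ({p} - Z)).card := Finset.card_image_le
      _ ≤ (Z - {p}).card + ({p} - Z).card := Finset.card_union_le _ _
      _ = 2 * Z.card := by
        rw [Finset.sub_singleton, Finset.singleton_sub,
          Finset.card_image_of_injective _ sub_left_injective,
          Finset.card_image_of_injective _ sub_right_injective, two_mul]
  · push_cast
    exact hball
  · simp only [Finset.mem_image, Finset.mem_union, Finset.sub_singleton, Finset.singleton_sub]
    rintro _ ⟨_, ⟨z, hz, rfl⟩ | ⟨z, hz, rfl⟩, rfl⟩
    · exact ⟨z, hz, _, rfl⟩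
    · exact ⟨z, hz, -r (p - z), by rw [neg_smul, ← smul_neg, neg_sub]⟩

theorem stmt6 (k : ℕ) (Z : Finset (ℝ × ℝ)) (hk : Z.card = k)
    (p : ℝ × ℝ) (hp : p ∈ interior (convexHull ℝ (Z : Set (ℝ × ℝ)))) :
    ∃ V : Finset (ℝ × ℝ), V.card ≤ 2 * k ∧
      hilbertUnitBall (convexHull ℝ (Z : Set (ℝ × ℝ))) p = convexHull ℝ (V : Set (ℝ × ℝ)) ∧
      ∀ v ∈ V, ∃ z ∈ Z, ∃ c : ℝ, v = c • (z - p) :=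
  hk ▸ stmt6_general (by simp) Z p hp
end

section
/- For every α ∈ [0,1), ∫₀^α ((2+y)/(1−y²))·log((1+y)/(1−y)) dy = Li₂((1−α)/2) − π²/12 + (log 2)²/2 + (1/4)·( (log(1+α))² − 4·(log 2)·log(1−α) + 3·(log(1−α))² − 2·log(1−α)·log(1+α) ). -/
open MeasureTheory Real

/-- The real dilogarithm, for `z < 1`. -/
noncomputable def Li2 (z : ℝ) : ℝ := -∫ v in (0 : ℝ)..z, Real.log (1 - v) / v

/-! By partial fractions, with `a = log (1 + y)` and `b = log (1 - y)`, the integrand is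
`(3 / 2) (a - b) / (1 - y) + (1 / 2) (a - b) / (1 + y)`. All of it is the derivative of a quadratic
form in `a` and `b` except for the term `a / (1 - y)`, which is
`log ((1 + y) / 2) / (1 - y) + log 2 / (1 - y)`, the first summand being the derivative of
`Li₂((1 - y) / 2)`. The constant of integration is `Li₂(1 / 2)`, which Euler's reflection formula
`Li₂(z) + Li₂(1 - z) + log z log (1 - z) = π² / 6` gives at `z = 1 / 2`; the left-hand side of that
formula has derivative zero and tends to `Li₂(1) = ζ(2)` as `z → 0`. -/

lemma continuousOn_dslope_log_one_sub :
    ContinuousOn (dslope (fun v : ℝ ↦ log (1 - v)) 0) (Set.Iio 1) := by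
  refine (continuousOn_dslope (Iio_mem_nhds one_pos)).2 ⟨?_, ?_⟩
  · exact ContinuousOn.log (by fun_prop) fun v hv ↦ (sub_pos.2 hv).ne'
  · exact DifferentiableAt.log (by fun_prop) (by norm_num)

lemma dslope_log_one_sub_of_ne {v : ℝ} (hv : v ≠ 0) :
    dslope (fun v : ℝ ↦ log (1 - v)) 0 v = log (1 - v) / v := by
  simp [dslope_of_ne _ hv, slope_def_field]

lemma intervalIntegrable_log_one_sub_div {a b : ℝ} (ha : a < 1) (hb : b < 1) :
    IntervalIntegrable (fun v ↦ log (1 - v) / v) volume a b := by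
  have hcont : ContinuousOn (dslope (fun v : ℝ ↦ log (1 - v)) 0) (Set.uIcc a b) :=
    continuousOn_dslope_log_one_sub.mono fun v hv ↦ hv.2.trans_lt (max_lt ha hb)
  refine hcont.intervalIntegrable.congr_ae (ae_restrict_of_ae ?_)
  filter_upwards [volume.ae_ne (0 : ℝ)] with v hv using dslope_log_one_sub_of_ne hv

lemma continuousOn_log_mul_log_one_sub :
    ContinuousOn (fun z : ℝ ↦ log z * log (1 - z)) (Set.Iio 1) := by
  -- At `0` the product is `(z log z) * (log (1 - z) / z)`, and both factors extend continuously.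
  refine (continuous_mul_log.continuousOn.mul continuousOn_dslope_log_one_sub).congr fun z _ ↦ ?_
  rcases eq_or_ne z 0 with rfl | hz
  · simp
  · simp only [Pi.mul_apply, dslope_log_one_sub_of_ne hz]
    field_simp

@[simp]
lemma Li2_zero : Li2 0 = 0 := by
  simp [Li2]

lemma hasDerivAt_Li2 {z : ℝ} (hz : z < 1) (hz₀ : z ≠ 0) :
    HasDerivAt Li2 (-(log (1 - z) / z)) z := by
  have hmeas : Measurable fun v : ℝ ↦ log (1 - v) / v := by fun_prop
  have hcont : ContinuousAt (fun v : ℝ ↦ log (1 - v) / v) z :=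
    (ContinuousAt.log (by fun_prop) (sub_pos.2 hz).ne').div continuousAt_id hz₀
  exact (intervalIntegral.integral_hasDerivAt_right
    (intervalIntegrable_log_one_sub_div one_pos hz)
    hmeas.stronglyMeasurable.stronglyMeasurableAtFilter hcont).neg

lemma hasSum_pow_div_succ {v : ℝ} (hv : |v| < 1) (hv₀ : v ≠ 0) :
    HasSum (fun n : ℕ ↦ v ^ n / (n + 1)) (-(log (1 - v) / v)) := by
  have hterm (n : ℕ) : v ^ (n + 1) / ((n : ℝ) + 1) / v = v ^ n / (n + 1) := by
    rw [div_right_comm, pow_succ, mul_div_cancel_right₀ _ hv₀]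
  simpa only [hterm, neg_div] using (hasSum_pow_div_log_of_abs_lt_one hv).div_const v

lemma Li2_eq_integral_tsum {z : ℝ} (hz : |z| ≤ 1) :
    Li2 z = ∫ v in (0 : ℝ)..z, ∑' n : ℕ, v ^ n / ((n : ℝ) + 1) := by
  rw [Li2, ← intervalIntegral.integral_neg]
  refine intervalIntegral.integral_congr_uIoo fun v ⟨hmin, hmax⟩ ↦ ?_
  have hv : |v| < 1 := by grind
  have hv₀ : v ≠ 0 := by grind
  exact (hasSum_pow_div_succ hv hv₀).tsum_eq.symm

lemma summable_one_div_succ_sq : Summable fun n : ℕ ↦ 1 / ((n : ℝ) + 1) ^ 2 := by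
  simpa using (summable_nat_add_iff 1).2 hasSum_zeta_two.summable

lemma norm_pow_succ_div_succ_sq_le {z : ℝ} (hz : |z| ≤ 1) (n : ℕ) :
    ‖z ^ (n + 1) / ((n : ℝ) + 1) ^ 2‖ ≤ 1 / ((n : ℝ) + 1) ^ 2 := by
  rw [norm_div, norm_pow, norm_of_nonneg (by positivity : (0 : ℝ) ≤ ((n : ℝ) + 1) ^ 2)]
  gcongr
  exact pow_le_one₀ (norm_nonneg z) hz

lemma setIntegral_uIoc_norm_pow_div_succ (z : ℝ) (n : ℕ) :
    ∫ v in Set.uIoc 0 z, ‖v ^ n / ((n : ℝ) + 1)‖ = ‖z ^ (n + 1) / ((n : ℝ) + 1) ^ 2‖ := by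
  have h := integral_pow_abs_sub_uIoc (a := 0) (b := z) (n := n)
  simp only [sub_zero] at h
  have hn : |(n : ℝ) + 1| = n + 1 := abs_of_nonneg (by positivity)
  simp only [norm_div, norm_pow, norm_eq_abs, hn, integral_div, h]
  field_simp

lemma hasSum_Li2 {z : ℝ} (hz : |z| ≤ 1) :
    HasSum (fun n : ℕ ↦ z ^ (n + 1) / ((n : ℝ) + 1) ^ 2) (Li2 z) := by
  -- The sup norms `1 / (n + 1)` on `[0, 1]` are not summable, the `L¹` norms are.
  have hsum : Summable fun n : ℕ ↦ ∫ v in Set.uIoc 0 z, ‖v ^ n / ((n : ℝ) + 1)‖ := by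
    simp only [setIntegral_uIoc_norm_pow_div_succ]
    exact summable_one_div_succ_sq.of_nonneg_of_le (fun n ↦ norm_nonneg _)
      (norm_pow_succ_div_succ_sq_le hz)
  have hint (n : ℕ) : IntegrableOn (fun v : ℝ ↦ v ^ n / ((n : ℝ) + 1)) (Set.uIoc 0 z) :=
    intervalIntegrable_iff.1 (Continuous.intervalIntegrable (by fun_prop) 0 z)
  have hterm (n : ℕ) :
      ∫ v in (0 : ℝ)..z, v ^ n / ((n : ℝ) + 1) = z ^ (n + 1) / ((n : ℝ) + 1) ^ 2 := by
    rw [intervalIntegral.integral_div, integral_pow, zero_pow n.succ_ne_zero, sub_zero, div_div,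
      ← sq]
  simp only [Li2_eq_integral_tsum hz, ← hterm, intervalIntegral.intervalIntegral_eq_integral_uIoc]
  exact (hasSum_integral_of_summable_integral_norm hint hsum).const_smul _

lemma continuousOn_Li2 : ContinuousOn Li2 (Set.Icc (-1) 1) := by
  refine (continuousOn_tsum (fun n ↦ by fun_prop) summable_one_div_succ_sq
    fun n z hz ↦ norm_pow_succ_div_succ_sq_le (abs_le.2 hz) n).congr fun z hz ↦ ?_
  exact (hasSum_Li2 (abs_le.2 hz)).tsum_eq.symm

lemma Li2_one : Li2 1 = π ^ 2 / 6 := by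
  have h := (hasSum_nat_add_iff' 1).2 hasSum_zeta_two
  simpa using (hasSum_Li2 (z := 1) (by simp)).unique (by simpa using h)

lemma hasDerivAt_Li2_add_Li2_one_sub_add_log_mul_log {z : ℝ} (hz : z ∈ Set.Ioo 0 1) :
    HasDerivAt (fun z ↦ Li2 z + Li2 (1 - z) + log z * log (1 - z)) 0 z := by
  have hz₀ : z ≠ 0 := hz.1.ne'
  have hz₁ : 1 - z ≠ 0 := (sub_pos.2 hz.2).ne'
  have hsub : HasDerivAt (fun z : ℝ ↦ 1 - z) (-1) z := (hasDerivAt_id z).const_sub 1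
  have hLi2 := hasDerivAt_Li2 hz.2 hz₀
  have hLi2_sub := (hasDerivAt_Li2 (z := 1 - z) (by linarith [hz.1]) hz₁).comp z hsub
  refine ((hLi2.add hLi2_sub).add ((hasDerivAt_log hz₀).mul (hsub.log hz₁))).congr_deriv ?_
  simp only [sub_sub_cancel]
  field_simp
  ring

lemma Li2_add_Li2_one_sub {z : ℝ} (hz : z ∈ Set.Ioo 0 1) :
    Li2 z + Li2 (1 - z) = π ^ 2 / 6 - log z * log (1 - z) := by
  have hcont : ContinuousOn (fun z ↦ Li2 z + Li2 (1 - z) + log z * log (1 - z))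
      (Set.Icc 0 z) := by
    refine (ContinuousOn.add ?_ ?_).add ?_
    · exact continuousOn_Li2.mono fun x hx ↦ by grind
    · exact continuousOn_Li2.comp (by fun_prop) fun x hx ↦ by grind
    · exact continuousOn_log_mul_log_one_sub.mono fun x hx ↦ hx.2.trans_lt hz.2
  obtain ⟨c, -, hc⟩ := exists_hasDerivAt_eq_slope _ (fun _ ↦ 0) hz.1 hcont fun x hx ↦
    hasDerivAt_Li2_add_Li2_one_sub_add_log_mul_log ⟨hx.1, hx.2.trans hz.2⟩
  have hsub := (div_eq_zero_iff.1 hc.symm).resolve_right (sub_ne_zero.2 hz.1.ne')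
  simp only [Li2_zero, sub_zero, Li2_one, log_one, mul_zero] at hsub
  linarith

lemma Li2_one_half : Li2 (1 / 2) = π ^ 2 / 12 - log 2 ^ 2 / 2 := by
  have h := Li2_add_Li2_one_sub (z := 1 / 2) (by norm_num)
  rw [show (1 : ℝ) - 1 / 2 = 1 / 2 by norm_num, one_div, log_inv, ← one_div] at h
  linarith

/-- An antiderivative of `(2 + y) / (1 - y²) * log ((1 + y) / (1 - y))` on `(-1, 1)`. Its increment
over `[0, α]` is the Holmes–Thompson integral over the triangle `|x| < y < α`; no constant of
integration is added, so its value at `0` is `Li₂(1 / 2)`. -/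
noncomputable def triangleAreaPrimitive (y : ℝ) : ℝ :=
  Li2 ((1 - y) / 2) + 1 / 4 * (log (1 + y) ^ 2 - 4 * log 2 * log (1 - y) +
    3 * log (1 - y) ^ 2 - 2 * log (1 - y) * log (1 + y))

lemma triangleAreaPrimitive_zero : triangleAreaPrimitive 0 = Li2 (1 / 2) := by
  simp [triangleAreaPrimitive]

lemma hasDerivAt_Li2_one_sub_div_two {y : ℝ} (hy : y ∈ Set.Ioo (-1) 1) :
    HasDerivAt (fun y ↦ Li2 ((1 - y) / 2)) ((log (1 + y) - log 2) / (1 - y)) y := by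
  have hsub : HasDerivAt (fun y : ℝ ↦ (1 - y) / 2) (-1 / 2) y :=
    ((hasDerivAt_id y).const_sub 1).div_const 2
  have hy₁ : 1 - y ≠ 0 := by linarith [hy.2]
  have hLi2 := hasDerivAt_Li2 (z := (1 - y) / 2) (by linarith [hy.1]) (by positivity)
  refine (hLi2.comp y hsub).congr_deriv ?_
  rw [show 1 - (1 - y) / 2 = (1 + y) / 2 by ring, log_div (by linarith [hy.1]) two_ne_zero]
  field_simp

lemma hasDerivAt_triangleAreaPrimitive {y : ℝ} (hy : y ∈ Set.Ioo (-1) 1) :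
    HasDerivAt triangleAreaPrimitive
      ((2 + y) / (1 - y ^ 2) * log ((1 + y) / (1 - y))) y := by
  have hp : 1 + y ≠ 0 := by linarith [hy.1]
  have hm : 1 - y ≠ 0 := by linarith [hy.2]
  have ha : HasDerivAt (fun y ↦ log (1 + y)) (1 / (1 + y)) y :=
    ((hasDerivAt_id y).const_add 1).log hp
  have hb : HasDerivAt (fun y ↦ log (1 - y)) (-1 / (1 - y)) y :=
    ((hasDerivAt_id y).const_sub 1).log hm
  refine ((hasDerivAt_Li2_one_sub_div_two hy).add
    (((((ha.pow 2).sub (hb.const_mul (4 * log 2))).add ((hb.pow 2).const_mul 3)).sub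
      ((hb.const_mul 2).mul ha)).const_mul (1 / 4))).congr_deriv ?_
  have hfactor : 1 - y ^ 2 = (1 - y) * (1 + y) := by ring
  rw [hfactor, log_div hp hm]
  field_simp
  ring

lemma continuousOn_two_add_div_mul_log :
    ContinuousOn (fun y : ℝ ↦ (2 + y) / (1 - y ^ 2) * log ((1 + y) / (1 - y)))
      (Set.Ioo (-1) 1) := by
  have hp : ∀ y ∈ Set.Ioo (-1 : ℝ) 1, 1 + y ≠ 0 := fun y hy ↦ by linarith [hy.1]
  have hm : ∀ y ∈ Set.Ioo (-1 : ℝ) 1, 1 - y ≠ 0 := fun y hy ↦ by linarith [hy.2]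
  refine ContinuousOn.mul ?_ (ContinuousOn.log ?_ fun y hy ↦ div_ne_zero (hp y hy) (hm y hy))
  · refine ContinuousOn.div (by fun_prop) (by fun_prop) fun y hy ↦ ?_
    rw [show 1 - y ^ 2 = (1 - y) * (1 + y) by ring]
    exact mul_ne_zero (hm y hy) (hp y hy)
  · exact ContinuousOn.div (by fun_prop) (by fun_prop) hm

theorem stmt13_general (α : ℝ) (hα : α ∈ Set.Ioo (-1 : ℝ) 1) :
    (∫ y in (0 : ℝ)..α, ((2 + y) / (1 - y ^ 2)) * Real.log ((1 + y) / (1 - y))) =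
      Li2 ((1 - α) / 2) - π ^ 2 / 12 + (Real.log 2) ^ 2 / 2 +
        (1 / 4) * ((Real.log (1 + α)) ^ 2 - 4 * Real.log 2 * Real.log (1 - α) +
          3 * (Real.log (1 - α)) ^ 2 - 2 * Real.log (1 - α) * Real.log (1 + α)) := by
  have hsubset : Set.uIcc 0 α ⊆ Set.Ioo (-1) 1 :=
    Set.OrdConnected.uIcc_subset Set.ordConnected_Ioo (by norm_num) hα
  rw [intervalIntegral.integral_eq_sub_of_hasDerivAt
      (fun y hy ↦ hasDerivAt_triangleAreaPrimitive (hsubset hy))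
      (continuousOn_two_add_div_mul_log.mono hsubset).intervalIntegrable,
    triangleAreaPrimitive_zero, Li2_one_half, triangleAreaPrimitive]
  ring

theorem stmt13 (α : ℝ) (hα : α ∈ Set.Ico (0 : ℝ) 1) :
    (∫ y in (0 : ℝ)..α, ((2 + y) / (1 - y ^ 2)) * Real.log ((1 + y) / (1 - y))) =
      Li2 ((1 - α) / 2) - π ^ 2 / 12 + (Real.log 2) ^ 2 / 2 +
        (1 / 4) * ((Real.log (1 + α)) ^ 2 - 4 * Real.log 2 * Real.log (1 - α) +
          3 * (Real.log (1 - α)) ^ 2 - 2 * Real.log (1 - α) * Real.log (1 + α)) :=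
  stmt13_general α ⟨by linarith [hα.1], hα.2⟩
end
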